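/- Let $(A, \mathfrak{m})$ be a Cohen-Macaulay local ring of dimension $d > 0$ with infinite residue field, $I$ an $\mathfrak{m}$-primary ideal, $Q$ a minimal reduction of $I$, and suppose $e_1(I) = e_0(I) - \ell_A(A/I) + 1$. Set $c = \ell_A(I^2/QI)$. Then $0 < c \leq d$, and if $c < d$ then for all $n \geq 0$, $\ell_A(A/I^{n+1}) = e_0\binom{n+d}{d} - e_1\binom{n+d-1}{d-1} + \binom{n+d-c-1}{d-c-1}$; consequently $e_{c+1}(I) = (-1)^{c+1}$ and $e_i(I) = 0$ for $2 \leq i \leq d$, $i \neq c+1$. -/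

import Mathlib

open IsLocalRing

/-- A Noetherian local ring is Cohen–Macaulay of dimension `d` iff its Krull dimension
is `d` and there is a regular sequence of length `d` in the maximal ideal. -/
def IsCohenMacaulayLocal (A : Type*) [CommRing A] [IsLocalRing A] (d : ℕ) : Prop :=
  ringKrullDim A = d ∧
    ∃ rs : List A, rs.length = d ∧ (∀ x ∈ rs, x ∈ maximalIdeal A) ∧
      RingTheory.Sequence.IsRegular A rs

/-- `I` is primary to the maximal ideal (i.e. `𝔪`-primary). -/
def IsPrimaryToMax (A : Type*) [CommRing A] [IsLocalRing A] (I : Ideal A) : Prop :=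
  I ≤ maximalIdeal A ∧ maximalIdeal A ≤ I.radical

/-- The length of a module, as the Krull dimension of its submodule lattice. -/
noncomputable def moduleLength (A M : Type*) [CommRing A] [AddCommGroup M]
    [Module A M] : WithBot ℕ∞ :=
  Order.krullDim (Submodule A M)

section RegularSequences

variable {A : Type*} [CommRing A]

/-- `x` is a non-zero-divisor modulo the ideal `J`. -/
def RegularMod (J : Ideal A) (x : A) : Prop :=
  ∀ u, x * u ∈ J → u ∈ J

lemma RegularMod.swap {J : Ideal A} {x y : A} (hx : RegularMod J x)
    (hy : RegularMod (J ⊔ Ideal.span {x}) y) : RegularMod (J ⊔ Ideal.span {y}) x := by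
  intro u hu
  obtain ⟨j, hj, z, hz, h⟩ := Submodule.mem_sup.1 hu
  obtain ⟨v, rfl⟩ := Ideal.mem_span_singleton'.1 hz
  have hv : v ∈ J ⊔ Ideal.span {x} := by
    apply hy
    have : y * v = -j + u * x := by linear_combination h
    rw [this]
    exact Submodule.add_mem_sup (neg_mem hj) (Ideal.mem_span_singleton'.2 ⟨u, rfl⟩)
  obtain ⟨j', hj', z', hz', rfl⟩ := Submodule.mem_sup.1 hv
  obtain ⟨w, rfl⟩ := Ideal.mem_span_singleton'.1 hz'
  have h2 : u - y * w ∈ J := by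
    apply hx
    have : x * (u - y * w) = j + y * j' := by linear_combination -h
    rw [this]
    exact add_mem hj (J.mul_mem_left _ hj')
  have : u = (u - y * w) + w * y := by ring
  rw [this]
  exact Submodule.add_mem_sup h2 (Ideal.mem_span_singleton'.2 ⟨w, rfl⟩)

lemma exists_prime_eq_colon [IsNoetherianRing A] {J : Ideal A} {u : A} (hu : u ∉ J) :
    ∃ P ∈ associatedPrimes A (A ⧸ J), ∀ x, x * u ∈ J → x ∈ P := by
  obtain ⟨P, hP, h⟩ := exists_le_isAssociatedPrime_of_isNoetherianRing A
    (Ideal.Quotient.mk J u) (by rwa [Ne, Ideal.Quotient.eq_zero_iff_mem])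
  refine ⟨P, hP, fun x hx => h ?_⟩
  rw [Submodule.mem_colon_singleton, Submodule.mem_bot]
  exact Ideal.Quotient.eq_zero_iff_mem.2 hx

lemma mem_associatedPrimes_quotient [IsNoetherianRing A] {J P : Ideal A}
    (h : P ∈ associatedPrimes A (A ⧸ J)) : P.IsPrime ∧ ∃ u ∉ J, ∀ x, x ∈ P ↔ x * u ∈ J := by
  obtain ⟨hP, v, hv⟩ := isAssociatedPrime_iff.1 h
  obtain ⟨u, rfl⟩ := Ideal.Quotient.mk_surjective v
  have key : ∀ x, x ∈ P ↔ x * u ∈ J := by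
    intro x
    rw [hv, Submodule.mem_colon_singleton, Submodule.mem_bot]
    exact Ideal.Quotient.eq_zero_iff_mem (I := J) (a := x * u)
  refine ⟨hP, u, fun h => hP.ne_top ?_, key⟩
  rw [Ideal.eq_top_iff_one, key]
  simpa using h

variable [IsLocalRing A]

/-- The quotient `A ⧸ J` has a regular sequence of length `n` in the maximal ideal. -/
def HasRegularSeq : Ideal A → ℕ → Prop
  | J, 0 => J ≤ maximalIdeal A
  | J, n + 1 => ∃ x ∈ maximalIdeal A, RegularMod J x ∧ HasRegularSeq (J ⊔ Ideal.span {x}) n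

lemma HasRegularSeq.le : ∀ {n : ℕ} {J : Ideal A}, HasRegularSeq J n → J ≤ maximalIdeal A
  | 0, _, h => h
  | _ + 1, _, ⟨_, _, _, h⟩ => le_sup_left.trans h.le

/-- The socle of `A ⧸ J` vanishes. -/
def SocleFree (J : Ideal A) : Prop :=
  ∀ u, (∀ x ∈ maximalIdeal A, x * u ∈ J) → u ∈ J

lemma RegularMod.socleFree {J : Ideal A} {x : A} (hx : x ∈ maximalIdeal A) (h : RegularMod J x) :
    SocleFree J := fun u hu => h u (hu x hx)

lemma exists_regularMod [IsNoetherianRing A] {J₁ J₂ J₃ : Ideal A} (h₁ : SocleFree J₁)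
    (h₂ : SocleFree J₂) (h₃ : SocleFree J₃) :
    ∃ y ∈ maximalIdeal A, RegularMod J₁ y ∧ RegularMod J₂ y ∧ RegularMod J₃ y := by
  let S : Set (Ideal A) := associatedPrimes A (A ⧸ J₁) ∪ associatedPrimes A (A ⧸ J₂) ∪
    associatedPrimes A (A ⧸ J₃)
  have hfin : S.Finite := ((associatedPrimes.finite A _).union (associatedPrimes.finite A _)).union
    (associatedPrimes.finite A _)
  have hprime : ∀ P ∈ S, P.IsPrime := by
    rintro P ((h | h) | h) <;> exact (mem_associatedPrimes_quotient h).1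
  have hsoc : ∀ J : Ideal A, SocleFree J → maximalIdeal A ∉ associatedPrimes A (A ⧸ J) := by
    intro J hJ h
    obtain ⟨-, u, hu, hm⟩ := mem_associatedPrimes_quotient h
    exact hu (hJ u fun x hx => (hm x).1 hx)
  have hreg : ∀ (J : Ideal A) (y : A), (∀ P ∈ associatedPrimes A (A ⧸ J), y ∉ P) →
      RegularMod J y := by
    intro J y hy u hu
    by_contra hc
    obtain ⟨P, hP, h⟩ := exists_prime_eq_colon hc
    exact hy P hP (h y hu)
  have : ¬ ((maximalIdeal A : Set A) ⊆ ⋃ P ∈ S, (P : Set A)) := by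
    intro h
    obtain ⟨P, hP, hle⟩ := (Ideal.subset_union_prime_finite hfin (f := id) ⊥ ⊥
      (fun P hP _ _ => hprime P hP)).1 h
    have hPm : maximalIdeal A = P := (maximalIdeal.isMaximal A).eq_of_le (hprime P hP).ne_top hle
    rw [← hPm] at hP
    rcases hP with (h | h) | h
    · exact hsoc _ h₁ h
    · exact hsoc _ h₂ h
    · exact hsoc _ h₃ h
  obtain ⟨y, hy, hyS⟩ := Set.not_subset.1 this
  simp only [Set.mem_iUnion, not_exists] at hyS
  exact ⟨y, hy, hreg _ _ fun P hP => hyS P (.inl (.inl hP)),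
    hreg _ _ fun P hP => hyS P (.inl (.inr hP)), hreg _ _ fun P hP => hyS P (.inr hP)⟩

lemma HasRegularSeq.exchange [IsNoetherianRing A] {n : ℕ} {J : Ideal A} {a : A}
    (h : HasRegularSeq J (n + 1)) (ha : a ∈ maximalIdeal A) (haJ : RegularMod J a) :
    HasRegularSeq (J ⊔ Ideal.span {a}) n := by
  induction n generalizing J a with
  | zero =>
    exact sup_le h.le ((Ideal.span_singleton_le_iff_mem _).2 ha)
  | succ n ih =>
    obtain ⟨x, hx, hxJ, h'⟩ := h
    have h'' := h'
    obtain ⟨x', hx', hxJ', -⟩ := h''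
    have hsoc : SocleFree (J ⊔ Ideal.span {a}) := by
      intro u hu
      obtain ⟨j, hj, z, hz, e⟩ := Submodule.mem_sup.1 (hu x hx)
      obtain ⟨v, rfl⟩ := Ideal.mem_span_singleton'.1 hz
      have hv : v ∈ J ⊔ Ideal.span {x} := by
        refine hxJ'.socleFree hx' v fun t ht => ?_
        obtain ⟨j', hj', z', hz', e'⟩ := Submodule.mem_sup.1 (hu t ht)
        obtain ⟨w, rfl⟩ := Ideal.mem_span_singleton'.1 hz'
        have : t * v - x * w ∈ J := by
          apply haJ
          have : a * (t * v - x * w) = x * j' - t * j := by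
            linear_combination t * e - x * e'
          rw [this]
          exact sub_mem (J.mul_mem_left _ hj') (J.mul_mem_left _ hj)
        have e2 : t * v = (t * v - x * w) + w * x := by ring
        rw [e2]
        exact Submodule.add_mem_sup this (Ideal.mem_span_singleton'.2 ⟨w, rfl⟩)
      obtain ⟨j', hj', z', hz', rfl⟩ := Submodule.mem_sup.1 hv
      obtain ⟨w, rfl⟩ := Ideal.mem_span_singleton'.1 hz'
      have h2 : u - w * a ∈ J := by
        apply hxJ
        have : x * (u - w * a) = j + j' * a := by linear_combination -e
        rw [this]
        exact add_mem hj (J.mul_mem_right _ hj')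
      have : u = (u - w * a) + w * a := by ring
      rw [this]
      exact Submodule.add_mem_sup h2 (Ideal.mem_span_singleton'.2 ⟨w, rfl⟩)
    obtain ⟨y, hy, hy1, hy2, hy3⟩ :=
      exists_regularMod (hxJ.socleFree hx) (hxJ'.socleFree hx') hsoc
    have k1 : HasRegularSeq (J ⊔ Ideal.span {y}) (n + 1) := by
      refine ⟨x, hx, hxJ.swap hy2, ?_⟩
      rw [sup_right_comm]
      exact ih h' hy hy2 
    have k2 := ih k1 ha (haJ.swap hy3)
    rw [sup_right_comm] at k2
    exact ⟨y, hy, hy3, k2⟩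

lemma HasRegularSeq.le_ringKrullDim [IsNoetherianRing A] {n : ℕ} {J P : Ideal A}
    (h : HasRegularSeq J n) (hP : P ∈ associatedPrimes A (A ⧸ J)) :
    n ≤ ringKrullDim (A ⧸ P) := by
  induction n generalizing J P with
  | zero =>
    obtain ⟨hp, -⟩ := mem_associatedPrimes_quotient hP
    exact_mod_cast ringKrullDim_nonneg_of_nontrivial
  | succ n ih =>
    obtain ⟨x, hx, hxJ, h'⟩ := h
    obtain ⟨hp, u, hu, hPu⟩ := mem_associatedPrimes_quotient hP
    have hxP : x ∉ P := fun hxP => hu (hxJ u ((hPu x).1 hxP))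
    let N : Ideal A := J.colon P
    have hN : ∀ v, v ∈ N ↔ ∀ p ∈ P, v * p ∈ J := fun v => by
      simp [N, Submodule.mem_colon]
    have huN : u ∈ N := (hN u).2 fun p hp => by rw [mul_comm]; exact (hPu p).1 hp
    obtain ⟨v, hvN, hv⟩ : ∃ v ∈ N, v ∉ J ⊔ Ideal.span {x} := by
      by_contra! hc
      have : N ≤ J ⊔ Ideal.span {x} • N := by
        intro v hv
        obtain ⟨j, hj, z, hz, e⟩ := Submodule.mem_sup.1 (hc v hv)
        obtain ⟨w, rfl⟩ := Ideal.mem_span_singleton'.1 hz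
        rw [← e]
        refine Submodule.add_mem_sup hj ?_
        rw [mul_comm]
        refine Ideal.mul_mem_mul (Ideal.mem_span_singleton_self x) ((hN w).2 fun p hp => hxJ _ ?_)
        have : x * (w * p) = v * p - j * p := by rw [← e]; ring
        rw [this]
        exact sub_mem ((hN v).1 hv p hp) (J.mul_mem_right _ hj)
      have hle := Submodule.le_of_le_smul_of_le_jacobson_bot (IsNoetherian.noetherian N)
        (by
          rw [IsLocalRing.jacobson_eq_maximalIdeal _ bot_ne_top]
          exact (Ideal.span_singleton_le_iff_mem _).2 hx) this
      exact hu (hle huN)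
    obtain ⟨P', hP', hle⟩ := exists_prime_eq_colon hv
    have hPP' : P ≤ P' := fun p hp => hle p
      (Ideal.mem_sup_left (by rw [mul_comm]; exact (hN v).1 hvN p hp))
    have hxP' : x ∈ P' := hle x
      (Ideal.mem_sup_right (Ideal.mem_span_singleton'.2 ⟨v, mul_comm _ _⟩))
    have hdim := ringKrullDim_succ_le_of_surjective (Ideal.Quotient.factor hPP')
      (Ideal.Quotient.factor_surjective hPP') (r := Ideal.Quotient.mk P x)
      (mem_nonZeroDivisors_of_ne_zero (by rwa [Ne, Ideal.Quotient.eq_zero_iff_mem]))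
      (by simpa [Ideal.Quotient.eq_zero_iff_mem] using hxP')
    refine le_trans ?_ hdim
    have := ih h' hP'
    push_cast
    gcongr

lemma HasRegularSeq.regularMod [IsNoetherianRing A] {n : ℕ} {J : Ideal A}
    (h : HasRegularSeq J (n + 1)) {a : A} {b : Fin n → A}
    (hbm : ∀ i, b i ∈ maximalIdeal A)
    (hb : ∃ s, maximalIdeal A ^ s ≤ J ⊔ Ideal.span {a} ⊔ Ideal.span (Set.range b)) :
    RegularMod J a := by
  intro u hu
  by_contra hc
  obtain ⟨P, hP, haP⟩ := exists_prime_eq_colon hc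
  obtain ⟨s, hs⟩ := hb
  have hdim := h.le_ringKrullDim hP
  obtain ⟨hp, v, hv, hPv⟩ := mem_associatedPrimes_quotient hP
  have hJP : J ≤ P := fun x hx => (hPv x).2 (J.mul_mem_right _ hx)
  have hle : maximalIdeal A ^ s ≤ P ⊔ Ideal.span (Set.range b) := hs.trans
    (sup_le_sup_right (sup_le hJP ((Ideal.span_singleton_le_iff_mem _).2 (haP a hu))) _)
  have hloc : IsLocalRing (A ⧸ P) := .of_surjective' _ Ideal.Quotient.mk_surjective
  let S : Set (A ⧸ P) := Set.range (Ideal.Quotient.mk P ∘ b)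
  have hmap : maximalIdeal (A ⧸ P) ≤ Ideal.map (Ideal.Quotient.mk P) (maximalIdeal A) := by
    intro x hx
    obtain ⟨y, rfl⟩ := Ideal.Quotient.mk_surjective x
    refine Ideal.mem_map_of_mem _ ((mem_maximalIdeal y).2 fun hy => ?_)
    exact (mem_maximalIdeal _).1 hx (hy.map _)
  have hspan : maximalIdeal (A ⧸ P) ^ s ≤ Ideal.span S := by
    refine (Ideal.pow_right_mono hmap s).trans ?_
    rw [← Ideal.map_pow]
    refine (Ideal.map_mono hle).trans ?_
    rw [Ideal.map_sup, Ideal.map_span, ← Set.range_comp, Ideal.map_quotient_self, bot_sup_eq]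
  have hSm : Ideal.span S ≤ maximalIdeal (A ⧸ P) := by
    rw [Ideal.span_le]
    rintro _ ⟨i, rfl⟩
    refine (mem_maximalIdeal _).2 fun hi => (mem_maximalIdeal _).1 (hbm i) ?_
    have : IsLocalHom (Ideal.Quotient.mk P) := .of_surjective _ Ideal.Quotient.mk_surjective
    exact (isUnit_map_iff (Ideal.Quotient.mk P) _).1 hi
  have hmin : maximalIdeal (A ⧸ P) ∈ (Ideal.span S).minimalPrimes :=
    ⟨⟨inferInstance, hSm⟩, fun q hq _ => hq.1.le_of_pow_le (hspan.trans hq.2)⟩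
  have hcard := Ideal.height_le_card_of_mem_minimalPrimes_span (Set.finite_range _) hmin
  have hn : S.ncard ≤ n := by
    rw [← Nat.card_coe_set_eq]
    exact (Finite.card_range_le _).trans (by simp)
  rw [← maximalIdeal_height_eq_ringKrullDim] at hdim
  have h1 : ((n + 1 : ℕ) : ℕ∞) ≤ (maximalIdeal (A ⧸ P)).height := by exact_mod_cast hdim
  have h2 := h1.trans hcard
  have h3 : n + 1 ≤ S.ncard := by exact_mod_cast h2
  omega

lemma HasRegularSeq.of_isWeaklyRegular {J : Ideal A} (hJ : J ≤ maximalIdeal A) (rs : List A)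
    (hrs : ∀ x ∈ rs, x ∈ maximalIdeal A)
    (h : ∀ i (hi : i < rs.length), RegularMod (J ⊔ Ideal.ofList (rs.take i)) rs[i]) :
    HasRegularSeq J rs.length := by
  induction rs generalizing J with
  | nil => exact hJ
  | cons x rs ih =>
    have h0 := h 0 (by simp)
    rw [List.take_zero, Ideal.ofList_nil, sup_bot_eq] at h0
    refine ⟨x, hrs x (by simp), h0, ih ?_ ?_ ?_⟩
    · exact sup_le hJ ((Ideal.span_singleton_le_iff_mem _).2 (hrs x (by simp)))
    · exact fun y hy => hrs y (by simp [hy])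
    · intro i hi
      have := h (i + 1) (by simpa using hi)
      simpa [sup_assoc] using this

lemma HasRegularSeq.of_isRegular {rs : List A} (hrs : ∀ x ∈ rs, x ∈ maximalIdeal A)
    (h : RingTheory.Sequence.IsRegular A rs) : HasRegularSeq (⊥ : Ideal A) rs.length := by
  refine .of_isWeaklyRegular bot_le rs hrs fun i hi u hu => ?_
  have := h.regular_mod_prev i hi
  rw [smul_eq_mul, Ideal.mul_top] at this
  rw [bot_sup_eq] at hu ⊢
  exact mem_of_isSMulRegular_quotient_of_smul_mem this hu

lemma HasRegularSeq.regularMod_of_generators [IsNoetherianRing A] {n : ℕ} {J : Ideal A}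
    (h : HasRegularSeq J n) {a : Fin n → A} (ha : ∀ i, a i ∈ maximalIdeal A)
    (hs : ∃ s, maximalIdeal A ^ s ≤ J ⊔ Ideal.span (Set.range a)) (i : Fin n) :
    RegularMod (J ⊔ Ideal.span (a '' {j | j < i})) (a i) := by
  induction n generalizing J with
  | zero => exact i.elim0
  | succ n ih =>
    have hr : Ideal.span (Set.range a) =
        Ideal.span {a 0} ⊔ Ideal.span (Set.range fun i : Fin n => a i.succ) := by
      rw [← Ideal.span_union]
      congr 1
      ext x
      simp [Fin.exists_fin_succ, eq_comm]
    rw [hr, ← sup_assoc] at hs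
    have h0 := h.regularMod (fun i => ha i.succ) hs
    induction i using Fin.cases with
    | zero => simpa using h0
    | succ i =>
      have := ih (h.exchange (ha 0) h0) (fun i => ha i.succ) hs i
      rw [sup_assoc, ← Ideal.span_union] at this
      convert this using 3
      ext x
      simp [Fin.exists_fin_succ, eq_comm]

end RegularSequences

section QuasiRegularSequences

open MvPolynomial

variable {A ι : Type*} [CommRing A]

lemma isHomogeneous_iff_degree {F : MvPolynomial ι A} {n : ℕ} :
    F.IsHomogeneous n ↔ ∀ m, coeff m F ≠ 0 → m.degree = n := by
  have key : ∀ m : ι →₀ ℕ, Finsupp.weight 1 m = m.degree := fun m =>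
    (DFunLike.congr_fun (Finsupp.degree_eq_weight_one (R := ℕ)) m).symm
  exact ⟨fun h m hm => (key m).symm.trans (h hm), fun h m hm => (key m).trans (h m hm)⟩

/-- Only variables indexed by `s` occur in `F`. -/
def SupportedOn (s : Set ι) (F : MvPolynomial ι A) : Prop :=
  ∀ m, coeff m F ≠ 0 → ∀ j ∉ s, m j = 0

lemma SupportedOn.add {s : Set ι} {F G : MvPolynomial ι A} (hF : SupportedOn s F)
    (hG : SupportedOn s G) : SupportedOn s (F + G) := by
  intro m hm j hj
  by_cases h : coeff m F = 0
  · exact hG m (by simpa [h] using hm) j hj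
  · exact hF m h j hj

lemma SupportedOn.C_mul {s : Set ι} {F : MvPolynomial ι A} (hF : SupportedOn s F) (c : A) :
    SupportedOn s (C c * F) := by
  intro m hm j hj
  rw [coeff_C_mul] at hm
  exact hF m (right_ne_zero_of_mul hm) j hj

lemma SupportedOn.sub {s : Set ι} {F G : MvPolynomial ι A} (hF : SupportedOn s F)
    (hG : SupportedOn s G) : SupportedOn s (F - G) := by
  have : F - G = F + C (-1) * G := by simp [sub_eq_add_neg]
  rw [this]
  exact hF.add (hG.C_mul _)

lemma supportedOn_univ (F : MvPolynomial ι A) : SupportedOn Set.univ F := by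
  intro _ _ j hj
  simp at hj

variable (a : ι → A)

lemma eval_mem_mul_pow {s : Set ι} {F : MvPolynomial ι A} (hs : SupportedOn s F) {n : ℕ}
    (hF : F.IsHomogeneous n) {K : Ideal A} (hK : ∀ m, coeff m F ∈ K) :
    eval a F ∈ K * Ideal.span (a '' s) ^ n := by
  rw [eval_eq]
  refine sum_mem fun m hm => Ideal.mul_mem_mul (hK m) ?_
  rw [mem_support_iff] at hm
  have hn : ∑ i ∈ m.support, m i = n := by
    have := isHomogeneous_iff_degree.1 hF m hm
    rwa [Finsupp.degree_apply] at this
  rw [← hn, ← Finset.prod_pow_eq_pow_sum]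
  refine Ideal.prod_mem_prod fun j hj =>
    Ideal.pow_mem_pow (Ideal.subset_span (Set.mem_image_of_mem a ?_)) _
  by_contra h
  exact (Finsupp.mem_support_iff.1 hj) (hs m hm j h)

lemma exists_eval_eq_of_mem_pow {s : Set ι} {n : ℕ} {x : A}
    (hx : x ∈ Ideal.span (a '' s) ^ n) :
    ∃ F : MvPolynomial ι A, F.IsHomogeneous n ∧ SupportedOn s F ∧ eval a F = x := by
  rw [Set.image_eq_range, Ideal.mem_span_pow_iff_exists_isHomogeneous] at hx
  obtain ⟨p, hp, rfl⟩ := hx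
  refine ⟨rename Subtype.val p, hp.rename_isHomogeneous, fun m hm j hj => ?_, ?_⟩
  · obtain ⟨u, rfl, -⟩ := coeff_rename_ne_zero _ _ _ hm
    exact Finsupp.mapDomain_of_notMem_range _ _ (by simpa using hj)
  · rw [eval_rename]; rfl

lemma exists_eval_eq_of_mem_mul_pow {s : Set ι} {n : ℕ} {K : Ideal A} {x : A}
    (hx : x ∈ K * Ideal.span (a '' s) ^ n) :
    ∃ F : MvPolynomial ι A, F.IsHomogeneous n ∧ SupportedOn s F ∧ (∀ m, coeff m F ∈ K) ∧
      eval a F = x := by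
  induction hx using Submodule.mul_induction_on' with
  | mem_mul_mem c hc y hy =>
    obtain ⟨F, hF, hs, rfl⟩ := exists_eval_eq_of_mem_pow a hy
    refine ⟨C c * F, hF.C_mul c, hs.C_mul c, fun m => ?_, by simp⟩
    rw [coeff_C_mul]
    exact K.mul_mem_right _ hc
  | add x _ y _ hx hy =>
    obtain ⟨F, hF, hs, hc, rfl⟩ := hx
    obtain ⟨G, hG, hs', hc', rfl⟩ := hy
    refine ⟨F + G, hF.add hG, hs.add hs', fun m => ?_, by simp⟩
    rw [coeff_add]
    exact add_mem (hc m) (hc' m)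

/-- The elements `a i`, `i ∈ s`, form a quasi-regular sequence. -/
def QuasiRegularOn (s : Set ι) : Prop :=
  ∀ (n : ℕ) (F : MvPolynomial ι A), F.IsHomogeneous n → SupportedOn s F → eval a F = 0 →
    ∀ m, coeff m F ∈ Ideal.span (a '' s)

variable {a}

lemma QuasiRegularOn.regularMod_pow {s : Set ι} (h : QuasiRegularOn a s) {b : A}
    (hb : RegularMod (Ideal.span (a '' s)) b) (n : ℕ) :
    RegularMod (Ideal.span (a '' s) ^ n) b := by
  induction n with
  | zero => intro u _; simp
  | succ n ih =>
    intro u hu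
    obtain ⟨G, hG, hs, rfl⟩ := exists_eval_eq_of_mem_pow a
      (ih u (Ideal.pow_le_pow_right n.le_succ hu))
    rw [pow_succ'] at hu ⊢
    obtain ⟨G', hG', hs', hc, he⟩ := exists_eval_eq_of_mem_mul_pow a hu
    refine eval_mem_mul_pow a hs hG fun m => hb _ ?_
    have := h n (C b * G - G') ((hG.C_mul b).sub hG') ((hs.C_mul b).sub hs') (by simp [he]) m
    rw [coeff_sub, coeff_C_mul] at this
    simpa using add_mem this (hc m)

lemma QuasiRegularOn.insert {s : Set ι} (h : QuasiRegularOn a s) {i : ι}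
    (hi : RegularMod (Ideal.span (a '' s)) (a i)) : QuasiRegularOn a (Insert.insert i s) := by
  classical
  have hJ : Ideal.span (a '' s) ≤ Ideal.span (a '' Insert.insert i s) :=
    Ideal.span_mono (Set.image_mono (Set.subset_insert i s))
  have hiJ : a i ∈ Ideal.span (a '' Insert.insert i s) :=
    Ideal.subset_span ⟨i, Set.mem_insert i s, rfl⟩
  intro n
  induction n with
  | zero =>
    intro F hF hs he m
    rw [← totalDegree_zero_iff_isHomogeneous, totalDegree_eq_zero_iff_eq_C] at hF
    rw [hF] at he ⊢
    rw [eval_C] at he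
    simp [he]
  | succ n ih =>
    intro F hF hs he
    set e := Finsupp.single i 1 with hedef
    set G := F.modMonomial e with hGdef
    set H := F.divMonomial e with hHdef
    have hFGH : X i * H + G = F := divMonomial_add_modMonomial_single F i
    have hGc : ∀ m, coeff m G ≠ 0 → coeff m F ≠ 0 ∧ m i = 0 := by
      intro m hm
      by_cases hle : e ≤ m
      · exact absurd (coeff_modMonomial_of_le _ hle) hm
      · rw [hGdef, coeff_modMonomial_of_not_le _ hle] at hm
        refine ⟨hm, ?_⟩
        simpa [hedef] using hle
    have hG : G.IsHomogeneous (n + 1) := fun m hm => hF (hGc m hm).1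
    have hGs : SupportedOn s G := by
      intro m hm j hj
      by_cases hji : j = i
      · rw [hji]; exact (hGc m hm).2
      · exact hs m (hGc m hm).1 j (by simp [hji, hj])
    have hHc : ∀ m, coeff m H = coeff (e + m) F := fun m => coeff_divMonomial _ _ _
    have hH : H.IsHomogeneous n := by
      refine isHomogeneous_iff_degree.2 fun m hm => ?_
      rw [hHc] at hm
      have := isHomogeneous_iff_degree.1 hF _ hm
      rw [map_add, hedef, Finsupp.degree_single] at this
      omega
    have hHs : SupportedOn (Insert.insert i s) H := by
      intro m hm j hj
      rw [hHc] at hm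
      have := hs _ hm j hj
      rw [Finsupp.add_apply] at this
      omega
    have heq : a i * eval a H + eval a G = 0 := by
      rw [← he, ← hFGH]; simp
    have hGm : eval a G ∈ Ideal.span (a '' s) ^ (n + 1) := by
      simpa using eval_mem_mul_pow a hGs hG (K := ⊤) (by simp)
    have hHm : eval a H ∈ Ideal.span (a '' s) ^ (n + 1) := by
      apply h.regularMod_pow hi
      rw [eq_neg_of_add_eq_zero_left heq]
      exact neg_mem hGm
    obtain ⟨g, hg, hgs, hge⟩ := exists_eval_eq_of_mem_pow a hHm
    rw [pow_succ'] at hHm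
    obtain ⟨H', hH', hHs', hc', hHe'⟩ := exists_eval_eq_of_mem_mul_pow a hHm
    have h1 : ∀ m, coeff m H ∈ Ideal.span (a '' Insert.insert i s) := by
      intro m
      have hs'' : SupportedOn (Insert.insert i s) H' :=
        fun m hm j hj => hHs' m hm j (fun hjs => hj (Set.mem_insert_of_mem i hjs))
      have := ih (H - H') (hH.sub hH') (hHs.sub hs'') (by simp [hHe']) m
      rw [coeff_sub] at this
      simpa using add_mem this (hJ (hc' m))
    have h2 : ∀ m, coeff m G ∈ Ideal.span (a '' Insert.insert i s) := by
      intro m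
      have := h (n + 1) (C (a i) * g + G) ((hg.C_mul _).add hG) ((hgs.C_mul _).add hGs)
        (by simpa [hge] using heq) m
      rw [coeff_add, coeff_C_mul] at this
      simpa using sub_mem (hJ this) (Ideal.mul_mem_right (coeff m g) _ hiJ)
    intro m
    by_cases hle : e ≤ m
    · obtain ⟨m', rfl⟩ := exists_add_of_le hle
      rw [← hHc]; exact h1 m'
    · have := h2 m
      rwa [hGdef, coeff_modMonomial_of_not_le _ hle] at this

lemma quasiRegularOn_univ_of_regularMod {n : ℕ} {a : Fin n → A}
    (h : ∀ i, RegularMod (Ideal.span (a '' {j | j < i})) (a i)) : QuasiRegularOn a Set.univ := by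
  have : ∀ k ≤ n, QuasiRegularOn a {j | j.val < k} := by
    intro k
    induction k with
    | zero =>
      intro _ n F hF hs he m
      have hFC : F = C (coeff 0 F) := by
        ext m'
        rw [coeff_C]
        split_ifs with h0
        · rw [h0]
        · by_contra hc
          exact h0 (Finsupp.ext fun j => (hs m' hc j (by simp)).symm)
      rw [hFC] at he ⊢
      rw [eval_C] at he
      simp [he]
    | succ k ih =>
      intro hk
      have := (ih (by omega)).insert (i := ⟨k, hk⟩) (h ⟨k, hk⟩)
      convert this using 1
      ext j
      simp only [Set.mem_ofPred_eq, Set.mem_insert_iff, Fin.ext_iff]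
      omega
  convert this n le_rfl using 1
  ext j
  simp

end QuasiRegularSequences

section PolynomialsModuloPrimary

open MvPolynomial

lemma MvPolynomial.IsHomogeneous.of_mul {k ι : Type*} [Field k] {p q : MvPolynomial ι k} {n : ℕ}
    (h : (p * q).IsHomogeneous n) (h0 : p * q ≠ 0) : ∃ i, p.IsHomogeneous i := by
  have hp : p ≠ 0 := left_ne_zero_of_mul h0
  have hq : q ≠ 0 := right_ne_zero_of_mul h0
  have hord : ∀ r : MvPolynomial ι k, r ≠ 0 →
      ∃ t : ℕ, (r : MvPowerSeries ι k).order = t ∧ t ≤ r.totalDegree := by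
    intro r hr
    obtain ⟨m, hm⟩ := ne_zero_iff.1 hr
    have h1 : (r : MvPowerSeries ι k).order ≤ m.degree :=
      MvPowerSeries.order_le (by rwa [coeff_coe])
    obtain ⟨t, ht⟩ := ENat.ne_top_iff_exists.1 (ne_top_of_le_ne_top (ENat.natCast_ne_top _) h1)
    refine ⟨t, ht.symm, ?_⟩
    rw [← ht, Nat.cast_le] at h1
    refine h1.trans ?_
    have := le_totalDegree (mem_support_iff.2 hm)
    rwa [Finsupp.degree_apply]
  obtain ⟨t, ht, htp⟩ := hord p hp
  obtain ⟨u, hu, huq⟩ := hord q hq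
  have hdeg : p.totalDegree + q.totalDegree = n := by
    rw [← totalDegree_mul_of_isDomain hp hq, h.totalDegree h0]
  have hn : n ≤ t + u := by
    have h1 : (n : ℕ∞) ≤ ((p * q : MvPolynomial ι k) : MvPowerSeries ι k).order := by
      refine MvPowerSeries.nat_le_order fun m hm => ?_
      rw [coeff_coe]
      exact h.coeff_eq_zero hm.ne
    rw [coe_mul, MvPowerSeries.order_mul, ht, hu] at h1
    exact_mod_cast h1
  refine ⟨t, isHomogeneous_iff_degree.2 fun m hm => le_antisymm ?_ ?_⟩
  · have := le_totalDegree (mem_support_iff.2 hm)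
    rw [Finsupp.degree_apply]
    change ∑ i ∈ m.support, m i ≤ _ at this
    omega
  · have h1 : (p : MvPowerSeries ι k).order ≤ m.degree :=
      MvPowerSeries.order_le (by rwa [coeff_coe])
    rw [ht] at h1
    exact_mod_cast h1

variable {A : Type*} [CommRing A] {ι : Type*}

lemma mem_map_C_sup_span {J : Ideal A} {e : A} {F : MvPolynomial ι A}
    (hF : F ∈ (J ⊔ Ideal.span {e}).map C) : ∃ G, F - C e * G ∈ J.map C := by
  rw [Ideal.map_sup, Ideal.map_span, Set.image_singleton] at hF
  obtain ⟨x, hx, y, hy, rfl⟩ := Submodule.mem_sup.1 hF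
  obtain ⟨z, rfl⟩ := Ideal.mem_span_singleton'.1 hy
  exact ⟨z, by simpa [mul_comm] using hx⟩

lemma homogeneousComponent_mul_of_isHomogeneous {F : MvPolynomial ι A} {k : ℕ}
    (hF : F.IsHomogeneous k) (G : MvPolynomial ι A) (n : ℕ) :
    homogeneousComponent n (F * G) = if k ≤ n then F * homogeneousComponent (n - k) G else 0 := by
  classical
  let := gradedAlgebra (σ := ι) (R := A)
  have h : ∀ (p : MvPolynomial ι A) i,
      (DirectSum.decompose (homogeneousSubmodule ι A) p i : MvPolynomial ι A) =
        homogeneousComponent i p := fun p i => decomposition.decompose'_apply p i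
  rw [← h, ← h]
  exact DirectSum.coe_decompose_mul_of_left_mem (homogeneousSubmodule ι A) n hF

lemma homogeneousComponent_mem_map_C {J : Ideal A} {F : MvPolynomial ι A} (hF : F ∈ J.map C)
    (n : ℕ) : homogeneousComponent n F ∈ J.map C := by
  rw [mem_map_C_iff] at hF ⊢
  intro m
  rw [coeff_homogeneousComponent]
  split_ifs
  exacts [hF m, zero_mem _]

variable [IsLocalRing A]

lemma exists_colon_eq_maximalIdeal {J : Ideal A} (hJ : J ≠ ⊤)
    (hs : ∃ s, maximalIdeal A ^ s ≤ J) : ∃ e ∉ J, ∀ x, x * e ∈ J ↔ x ∈ maximalIdeal A := by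
  classical
  have h0 : Nat.find hs ≠ 0 := fun h => hJ (by
    have := Nat.find_spec hs
    rwa [h, pow_zero, Ideal.one_eq_top, top_le_iff] at this)
  obtain ⟨t, ht⟩ := Nat.exists_eq_succ_of_ne_zero h0
  have h1 : ¬ maximalIdeal A ^ t ≤ J := Nat.find_min hs (by omega)
  obtain ⟨e, he, heJ⟩ := SetLike.not_le_iff_exists.1 h1
  refine ⟨e, heJ, fun x => ⟨fun hx => ?_, fun hx => ?_⟩⟩
  · by_contra h
    have hu : IsUnit x := by simpa using h
    exact heJ ((Ideal.unit_mul_mem_iff_mem J hu).1 hx)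
  · have := Nat.find_spec hs
    rw [ht, Nat.succ_eq_add_one, pow_succ'] at this
    exact this (Ideal.mul_mem_mul hx he)

lemma map_residue_eq_zero_iff {F : MvPolynomial ι A} :
    map (residue A) F = 0 ↔ F ∈ (maximalIdeal A).map C := by
  rw [mem_map_C_iff, MvPolynomial.ext_iff]
  simp [coeff_map]

lemma C_mul_mem_map_C_iff {J : Ideal A} {e : A}
    (he : ∀ x, x * e ∈ J ↔ x ∈ maximalIdeal A) {F : MvPolynomial ι A} :
    C e * F ∈ J.map C ↔ map (residue A) F = 0 := by
  rw [map_residue_eq_zero_iff, mem_map_C_iff, mem_map_C_iff]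
  simp only [coeff_C_mul, mul_comm e, he]

variable [IsNoetherianRing A]

lemma mem_map_C_of_mul_mem {F : MvPolynomial ι A} (hF : map (residue A) F ≠ 0) {J : Ideal A}
    (hs : ∃ s, maximalIdeal A ^ s ≤ J) {G : MvPolynomial ι A} (h : F * G ∈ J.map C) :
    G ∈ J.map C := by
  induction J using IsNoetherian.induction generalizing G with
  | hgt J ih =>
  change Ideal A at J
  by_cases hJ : J = ⊤
  · rw [hJ, Ideal.map_top]; trivial
  obtain ⟨e, heJ, he⟩ := exists_colon_eq_maximalIdeal hJ hs
  have hlt : J < J ⊔ Ideal.span {e} := by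
    simpa using heJ
  obtain ⟨s, hs⟩ := hs
  obtain ⟨G', hG'⟩ := mem_map_C_sup_span
    (ih _ hlt ⟨s, hs.trans le_sup_left⟩ (Ideal.map_mono le_sup_left h))
  have h1 : C e * (F * G') ∈ J.map C := by
    have : C e * (F * G') = F * G - F * (G - C e * G') := by ring
    rw [this]
    exact sub_mem h (Ideal.mul_mem_left _ _ hG')
  rw [C_mul_mem_map_C_iff he, map_mul] at h1
  have h2 := (C_mul_mem_map_C_iff he).2 ((mul_eq_zero.1 h1).resolve_left hF)
  simpa using add_mem hG' h2

lemma exists_of_mul_sub_mul_mem {F G : MvPolynomial ι A} (hF : map (residue A) F ≠ 0)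
    (hFG : IsRelPrime (map (residue A) F) (map (residue A) G)) {J : Ideal A}
    (hs : ∃ s, maximalIdeal A ^ s ≤ J) {X Y : MvPolynomial ι A} (h : F * Y - G * X ∈ J.map C) :
    ∃ Z, Y - G * Z ∈ J.map C ∧ X - F * Z ∈ J.map C := by
  induction J using IsNoetherian.induction generalizing X Y with
  | hgt J ih =>
  change Ideal A at J
  by_cases hJ : J = ⊤
  · rw [hJ, Ideal.map_top]; simp
  obtain ⟨e, heJ, he⟩ := exists_colon_eq_maximalIdeal hJ hs
  have hlt : J < J ⊔ Ideal.span {e} := by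
    simpa using heJ
  obtain ⟨s, hs⟩ := hs
  obtain ⟨Z, hY, hX⟩ := ih _ hlt ⟨s, hs.trans le_sup_left⟩ (Ideal.map_mono le_sup_left h)
  obtain ⟨Y', hY'⟩ := mem_map_C_sup_span hY
  obtain ⟨X', hX'⟩ := mem_map_C_sup_span hX
  have h1 : C e * (F * Y' - G * X') ∈ J.map C := by
    have : C e * (F * Y' - G * X') = (F * Y - G * X) - F * (Y - G * Z - C e * Y')
      + G * (X - F * Z - C e * X') := by ring
    rw [this]
    exact add_mem (sub_mem h (Ideal.mul_mem_left _ _ hY')) (Ideal.mul_mem_left _ _ hX')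
  rw [C_mul_mem_map_C_iff he, map_sub, map_mul, map_mul, sub_eq_zero] at h1
  obtain ⟨W, hW⟩ := hFG.dvd_of_dvd_mul_left (Dvd.intro _ h1)
  obtain ⟨Z', rfl⟩ := map_surjective (residue A) residue_surjective W
  refine ⟨Z + C e * Z', ?_, ?_⟩
  · have h2 : C e * (Y' - G * Z') ∈ J.map C := by
      rw [C_mul_mem_map_C_iff he, map_sub, map_mul, sub_eq_zero]
      rw [hW] at h1
      refine mul_left_cancel₀ hF ?_
      rw [h1]; ring
    have : Y - G * (Z + C e * Z') = (Y - G * Z - C e * Y') + C e * (Y' - G * Z') := by ring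
    rw [this]
    exact add_mem hY' h2
  · have h2 : C e * (X' - F * Z') ∈ J.map C := by
      rw [C_mul_mem_map_C_iff he, map_sub, map_mul, sub_eq_zero, hW]
    have : X - F * (Z + C e * Z') = (X - F * Z - C e * X') + C e * (X' - F * Z') := by ring
    rw [this]
    exact add_mem hX' h2

lemma exists_of_mul_sub_mul_mem_of_isHomogeneous {F G : MvPolynomial ι A}
    (hF : map (residue A) F ≠ 0) (hFG : IsRelPrime (map (residue A) F) (map (residue A) G))
    {J : Ideal A} (hs : ∃ s, maximalIdeal A ^ s ≤ J) {X Y : MvPolynomial ι A}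
    (h : F * Y - G * X ∈ J.map C) {k l q r : ℕ} (hFk : F.IsHomogeneous k)
    (hGl : G.IsHomogeneous l) (hY : Y.IsHomogeneous q) (hX : X.IsHomogeneous r)
    (hkl : k + q = l + r) :
    ∃ Z, (Y - G * Z).IsHomogeneous q ∧ Y - G * Z ∈ J.map C ∧
      (X - F * Z).IsHomogeneous r ∧ X - F * Z ∈ J.map C := by
  obtain ⟨Z, hYZ, hXZ⟩ := exists_of_mul_sub_mul_mem hF hFG hs h
  have h1 := homogeneousComponent_mem_map_C hYZ q
  have h2 := homogeneousComponent_mem_map_C hXZ r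
  have h3 := homogeneousComponent_isHomogeneous q (Y - G * Z)
  have h4 := homogeneousComponent_isHomogeneous r (X - F * Z)
  rw [map_sub, homogeneousComponent_eq_self hY, homogeneousComponent_mul_of_isHomogeneous hGl]
    at h1 h3
  rw [map_sub, homogeneousComponent_eq_self hX, homogeneousComponent_mul_of_isHomogeneous hFk]
    at h2 h4
  by_cases hkr : k ≤ r
  · rw [if_pos hkr] at h2 h4
    rw [if_pos (by omega), show q - l = r - k by omega] at h1 h3
    exact ⟨_, h3, h1, h4, h2⟩
  · rw [if_neg hkr] at h2 h4
    rw [if_neg (by omega)] at h1 h3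
    exact ⟨0, by simpa using h3, by simpa using h1, by simpa using h4, by simpa using h2⟩

end PolynomialsModuloPrimary

section LowestTerms

open MvPolynomial

variable {A : Type*} [CommRing A] {ι : Type*} {a : ι → A}

lemma eval_mem_mul_span_range_pow {F : MvPolynomial ι A} {n : ℕ} (hF : F.IsHomogeneous n)
    {K : Ideal A} (hK : F ∈ K.map C) : eval a F ∈ K * Ideal.span (Set.range a) ^ n := by
  rw [← Set.image_univ]
  exact eval_mem_mul_pow a (supportedOn_univ F) hF (mem_map_C_iff.1 hK)

lemma eval_mem_span_range_pow {F : MvPolynomial ι A} {n : ℕ} (hF : F.IsHomogeneous n) :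
    eval a F ∈ Ideal.span (Set.range a) ^ n := by
  simpa using eval_mem_mul_span_range_pow (a := a) hF (K := ⊤) (by rw [Ideal.map_top]; trivial)

lemma exists_eval_eq_of_mem_span_range_pow {n : ℕ} {x : A}
    (hx : x ∈ Ideal.span (Set.range a) ^ n) :
    ∃ F : MvPolynomial ι A, F.IsHomogeneous n ∧ eval a F = x := by
  rw [← Set.image_univ] at hx
  obtain ⟨F, hF, -, h⟩ := exists_eval_eq_of_mem_pow a hx
  exact ⟨F, hF, h⟩

lemma exists_eval_eq_of_mem_mul_span_range_pow {n : ℕ} {K : Ideal A} {x : A}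
    (hx : x ∈ K * Ideal.span (Set.range a) ^ n) :
    ∃ F : MvPolynomial ι A, F.IsHomogeneous n ∧ F ∈ K.map C ∧ eval a F = x := by
  rw [← Set.image_univ] at hx
  obtain ⟨F, hF, -, hK, h⟩ := exists_eval_eq_of_mem_mul_pow a hx
  exact ⟨F, hF, mem_map_C_iff.2 hK, h⟩

lemma mem_pow_of_mem_mul_pow {J K : Ideal A} {m n : ℕ} (hmn : m ≤ n) {x : A}
    (hx : x ∈ J * K ^ n) : x ∈ K ^ m := by
  have h : J * K ^ n ≤ K ^ n := Ideal.mul_le_right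
  have h' : K ^ n ≤ K ^ m := Ideal.pow_le_pow_right hmn
  exact h' (h hx)

lemma eval_mul_mem_of_mem_map_C {F : MvPolynomial ι A} {n : ℕ} (hF : F.IsHomogeneous n)
    {J K : Ideal A} (hJ : F ∈ J.map C) {y : A} (hy : ∀ r ∈ J, r * y ∈ K) :
    eval a F * y ∈ K * Ideal.span (Set.range a) ^ n := by
  refine Submodule.mul_induction_on (eval_mem_mul_span_range_pow hF hJ) (fun r hr q hq => ?_)
    fun u v hu hv => ?_
  · rw [mul_right_comm]
    exact Ideal.mul_mem_mul (hy r hr) hq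
  · rw [add_mul]
    exact add_mem hu hv

lemma QuasiRegularOn.mem_map_C (hq : QuasiRegularOn a Set.univ) {J : Ideal A}
    (hJ : Ideal.span (Set.range a) ≤ J) {F : MvPolynomial ι A} {n : ℕ} (hF : F.IsHomogeneous n)
    (h : eval a F ∈ J * Ideal.span (Set.range a) ^ n) : F ∈ J.map C := by
  obtain ⟨G, hG, hGJ, he⟩ := exists_eval_eq_of_mem_mul_span_range_pow h
  have h1 : F - G ∈ J.map C := by
    rw [mem_map_C_iff]
    intro m
    apply hJ
    have := hq n (F - G) (hF.sub hG) (supportedOn_univ _) (by simp [he]) m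
    rwa [Set.image_univ] at this
  simpa using add_mem h1 hGJ

variable [IsLocalRing A]

lemma exists_isHomogeneous_map_residue_eq {p : MvPolynomial ι (ResidueField A)} {n : ℕ}
    (hp : p.IsHomogeneous n) :
    ∃ F : MvPolynomial ι A, F.IsHomogeneous n ∧ map (residue A) F = p := by
  obtain ⟨F, rfl⟩ := map_surjective (residue A) residue_surjective p
  refine ⟨homogeneousComponent n F, homogeneousComponent_isHomogeneous n F, ?_⟩
  ext m
  rw [coeff_map, coeff_homogeneousComponent, coeff_map]
  split_ifs with h
  · rfl
  · rw [map_zero, ← coeff_map, hp.coeff_eq_zero h]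

/-- The family `a` is quasi-regular and generates an ideal primary to the maximal ideal. -/
structure IsQuasiRegularParameters (a : ι → A) : Prop where
  quasiRegularOn : QuasiRegularOn a Set.univ
  exists_pow_le : ∃ s, maximalIdeal A ^ s ≤ Ideal.span (Set.range a)

namespace IsQuasiRegularParameters

lemma exists_pow_le_of_le (ha : IsQuasiRegularParameters a) {J : Ideal A}
    (hJ : Ideal.span (Set.range a) ≤ J) : ∃ s, maximalIdeal A ^ s ≤ J :=
  ha.exists_pow_le.imp fun _ h => h.trans hJ

variable [IsNoetherianRing A]

lemma mem_of_eval_mul_mem (ha : IsQuasiRegularParameters a) {J : Ideal A}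
    (hJ : Ideal.span (Set.range a) ≤ J) {F : MvPolynomial ι A} {k : ℕ} (hFk : F.IsHomogeneous k)
    (hF : map (residue A) F ≠ 0) {n : ℕ} {x : A}
    (hx : eval a F * x ∈ J * Ideal.span (Set.range a) ^ (n + k)) :
    x ∈ J * Ideal.span (Set.range a) ^ n := by
  have key : ∀ j ≤ n, x ∈ Ideal.span (Set.range a) ^ j := by
    intro j
    induction j with
    | zero => simp
    | succ j ih =>
      intro hj
      obtain ⟨X, hX, rfl⟩ := exists_eval_eq_of_mem_span_range_pow (ih (by omega))
      rw [pow_succ']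
      refine eval_mem_mul_span_range_pow hX (mem_map_C_of_mul_mem hF ha.exists_pow_le
        (ha.quasiRegularOn.mem_map_C le_rfl (hFk.mul hX) ?_))
      rw [map_mul, ← pow_succ']
      exact mem_pow_of_mem_mul_pow (by omega) hx
  obtain ⟨X, hX, rfl⟩ := exists_eval_eq_of_mem_span_range_pow (key n le_rfl)
  refine eval_mem_mul_span_range_pow hX (mem_map_C_of_mul_mem hF (ha.exists_pow_le_of_le hJ)
    (ha.quasiRegularOn.mem_map_C hJ (hFk.mul hX) ?_))
  rwa [map_mul, add_comm]

lemma exists_common_factor (ha : IsQuasiRegularParameters a) {J : Ideal A}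
    (hJ : Ideal.span (Set.range a) ≤ J) {F G : MvPolynomial ι A} {k i : ℕ}
    (hFk : F.IsHomogeneous k) (hG : G.IsHomogeneous (k + i)) (hF : map (residue A) F ≠ 0)
    (hFG : IsRelPrime (map (residue A) F) (map (residue A) G)) {n : ℕ} {x y : A}
    (h : eval a F * y - eval a G * x ∈ J * Ideal.span (Set.range a) ^ (n + k + i)) :
    ∃ z, y - eval a G * z ∈ J * Ideal.span (Set.range a) ^ (n + i) ∧
      x - eval a F * z ∈ J * Ideal.span (Set.range a) ^ n := by
  have step : ∀ K : Ideal A, Ideal.span (Set.range a) ≤ K → ∀ (j : ℕ) (z : A),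
      J * Ideal.span (Set.range a) ^ (n + k + i) ≤ K * Ideal.span (Set.range a) ^ (j + k + i) →
      y - eval a G * z ∈ Ideal.span (Set.range a) ^ (i + j) →
      x - eval a F * z ∈ Ideal.span (Set.range a) ^ j →
      ∃ z, y - eval a G * z ∈ K * Ideal.span (Set.range a) ^ (i + j) ∧
        x - eval a F * z ∈ K * Ideal.span (Set.range a) ^ j := by
    intro K hK j z hle hy hx
    obtain ⟨Y, hY, hYe⟩ := exists_eval_eq_of_mem_span_range_pow hy
    obtain ⟨X, hX, hXe⟩ := exists_eval_eq_of_mem_span_range_pow hx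
    have hX' : (G * X).IsHomogeneous (k + (i + j)) := by
      rw [← add_assoc]; exact hG.mul hX
    have h1 : F * Y - G * X ∈ K.map C := by
      refine ha.quasiRegularOn.mem_map_C hK ((hFk.mul hY).sub hX') ?_
      rw [show k + (i + j) = j + k + i by ring]
      apply hle
      rw [map_sub, map_mul, map_mul, hYe, hXe]
      convert h using 1
      ring
    obtain ⟨Z, hYZ, hYZ', hXZ, hXZ'⟩ := exists_of_mul_sub_mul_mem_of_isHomogeneous hF hFG
      (ha.exists_pow_le_of_le hK) h1 hFk hG hY hX (by ring)
    refine ⟨z + eval a Z, ?_, ?_⟩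
    · have := eval_mem_mul_span_range_pow (a := a) hYZ hYZ'
      rw [map_sub, map_mul, hYe] at this
      convert this using 1
      ring
    · have := eval_mem_mul_span_range_pow (a := a) hXZ hXZ'
      rw [map_sub, map_mul, hXe] at this
      convert this using 1
      ring
  have key : ∀ j ≤ n, ∃ z, y - eval a G * z ∈ Ideal.span (Set.range a) ^ (i + j) ∧
      x - eval a F * z ∈ Ideal.span (Set.range a) ^ j := by
    intro j
    induction j with
    | zero =>
      intro _
      refine ⟨0, ?_, by simp⟩
      have h1 : eval a F * y ∈ ⊤ * Ideal.span (Set.range a) ^ (i + k) := by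
        rw [Ideal.top_mul]
        have h2 : eval a G * x ∈ Ideal.span (Set.range a) ^ (i + k) :=
          Ideal.mul_mem_right _ _ (by rw [add_comm]; exact eval_mem_span_range_pow hG)
        have h3 := mem_pow_of_mem_mul_pow (show i + k ≤ n + k + i by omega) h
        simpa using add_mem h3 h2
      simpa using ha.mem_of_eval_mul_mem le_top hFk hF h1
    | succ j ih =>
      intro hj
      obtain ⟨z, hy, hx⟩ := ih (by omega)
      obtain ⟨z', hy', hx'⟩ := step _ le_rfl j z
        (by
          rw [← pow_succ']
          exact fun u hu => mem_pow_of_mem_mul_pow (by omega) hu) hy hx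
      rw [← pow_succ'] at hy' hx'
      exact ⟨z', hy', hx'⟩
  obtain ⟨z, hy, hx⟩ := key n le_rfl
  obtain ⟨z', hy', hx'⟩ := step J hJ n z le_rfl hy hx
  rw [add_comm i n] at hy'
  exact ⟨z', hy', hx'⟩

lemma exists_lowest_terms (ha : IsQuasiRegularParameters a) {I : Ideal A}
    (hI : Ideal.span (Set.range a) ≤ I) {n k i : ℕ} {x y : A}
    (hx : ∀ r ∈ maximalIdeal A, r * x ∈ I * Ideal.span (Set.range a) ^ n)
    (hx' : x ∉ I * Ideal.span (Set.range a) ^ n)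
    (hy : ∀ r ∈ maximalIdeal A, r * y ∈ I * Ideal.span (Set.range a) ^ (n + i))
    {f g : MvPolynomial ι A} (hf : f.IsHomogeneous k) (hg : g.IsHomogeneous (k + i))
    (hf0 : map (residue A) f ≠ 0)
    (h : eval a f * y - eval a g * x ∈ I * Ideal.span (Set.range a) ^ (n + k + i)) :
    ∃ (k' : ℕ) (F G : MvPolynomial ι A) (z : A), k' ≤ n ∧ F.IsHomogeneous k' ∧
      G.IsHomogeneous (k' + i) ∧ map (residue A) F ≠ 0 ∧
      y - eval a G * z ∈ I * Ideal.span (Set.range a) ^ (n + i) ∧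
      x - eval a F * z ∈ I * Ideal.span (Set.range a) ^ n := by
  obtain ⟨F₀, G₀, H₀, hrel, hF₀, hG₀⟩ :=
    UniqueFactorizationMonoid.exists_reduced_factors (map (residue A) f) hf0 (map (residue A) g)
  have hfh : (map (residue A) f).IsHomogeneous k := hf.map _
  have hgh : (map (residue A) g).IsHomogeneous (k + i) := hg.map _
  rw [← hF₀] at hf0 hfh
  obtain ⟨l, hl⟩ := hfh.of_mul hf0
  rw [mul_comm] at hf0 hfh
  obtain ⟨k', hk'⟩ := hfh.of_mul hf0
  rw [mul_comm] at hf0 hfh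
  have hlk : l + k' = k := (hl.mul hk').inj_right hfh hf0
  have hH0 : H₀ ≠ 0 := left_ne_zero_of_mul hf0
  have hGk : G₀.IsHomogeneous (k' + i) := by
    by_cases hG0 : G₀ = 0
    · rw [hG0]; exact isHomogeneous_zero _ _ _
    · rw [← hG₀, mul_comm] at hgh
      have hne := mul_ne_zero hG0 hH0
      obtain ⟨t, ht⟩ := hgh.of_mul hne
      have := (ht.mul hl).inj_right hgh hne
      rwa [show k' + i = t by omega]
  obtain ⟨F, hF, rfl⟩ := exists_isHomogeneous_map_residue_eq hk'
  obtain ⟨G, hG, rfl⟩ := exists_isHomogeneous_map_residue_eq hGk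
  obtain ⟨H, hH, rfl⟩ := exists_isHomogeneous_map_residue_eq hl
  have hF0 := right_ne_zero_of_mul hf0
  have h1 : eval a (f - H * F) * y ∈ I * Ideal.span (Set.range a) ^ (n + k + i) := by
    have hh : (f - H * F).IsHomogeneous k := hf.sub (hlk ▸ hH.mul hF)
    have := eval_mul_mem_of_mem_map_C (a := a) hh (J := maximalIdeal A)
      (map_residue_eq_zero_iff.1 (by rw [map_sub, map_mul, hF₀, sub_self])) hy
    rwa [mul_assoc, ← pow_add, show n + i + k = n + k + i by ring] at this
  have h2 : eval a (g - H * G) * x ∈ I * Ideal.span (Set.range a) ^ (n + k + i) := by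
    have hh : (g - H * G).IsHomogeneous (k + i) :=
      hg.sub (by rw [show k + i = l + (k' + i) by omega]; exact hH.mul hG)
    have := eval_mul_mem_of_mem_map_C (a := a) hh (J := maximalIdeal A)
      (map_residue_eq_zero_iff.1 (by rw [map_sub, map_mul, hG₀, sub_self])) hx
    rwa [mul_assoc, ← pow_add, ← add_assoc] at this
  have h3 : eval a H * (eval a F * y - eval a G * x) ∈
      I * Ideal.span (Set.range a) ^ (n + k' + i + l) := by
    rw [show n + k' + i + l = n + k + i by omega]
    convert add_mem (sub_mem h h1) h2 using 1
    simp only [map_sub, map_mul]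
    ring
  obtain ⟨z, hyz, hxz⟩ := ha.exists_common_factor hI hF hG hF0 hrel
    (ha.mem_of_eval_mul_mem hI hH hH0 h3)
  refine ⟨k', F, G, z, ?_, hF, hG, hF0, hyz, hxz⟩
  by_contra hlt
  apply hx'
  have : eval a F * z ∈ I * Ideal.span (Set.range a) ^ n := by
    refine Ideal.mul_mem_right _ _ (Ideal.mul_mono_left hI ?_)
    rw [← pow_succ']
    exact Ideal.pow_le_pow_right (by omega) (eval_mem_span_range_pow hF)
  simpa using add_mem hxz this

end IsQuasiRegularParameters

end LowestTerms

section Lengths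

open MvPolynomial

variable {A : Type*} [CommRing A]

lemma length_quotient_eq_add_length_ker {M₀ M₁ : Ideal A} (h : M₀ ≤ M₁) :
    Module.length A (A ⧸ M₀) =
      Module.length A (LinearMap.ker (Submodule.factor h)) + Module.length A (A ⧸ M₁) :=
  Module.length_eq_add_of_exact (LinearMap.ker (Submodule.factor h)).subtype (Submodule.factor h)
    (Submodule.subtype_injective _) (Submodule.factor_surjective h)
    (LinearMap.exact_subtype_ker_map _)

lemma length_add_le_length_quotient {P R : Type*} [AddCommGroup P] [Module A P] [AddCommGroup R]
    [Module A R] {M₀ M₁ : Ideal A} (h : M₀ ≤ M₁) (φ : P →ₗ[A] A) (π : P →ₗ[A] R)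
    (hπ : Function.Surjective π) (h₁ : ∀ p, φ p ∈ M₁) (h₀ : ∀ p, φ p ∈ M₀ → π p = 0) :
    Module.length A (A ⧸ M₁) + Module.length A R ≤ Module.length A (A ⧸ M₀) := by
  set ψ : P →ₗ[A] LinearMap.ker (Submodule.factor h) :=
    (M₀.mkQ.comp φ).codRestrict _ (fun p => by
      rw [LinearMap.mem_ker, LinearMap.comp_apply, Submodule.factor_mk, Submodule.mkQ_apply,
        Submodule.Quotient.mk_eq_zero]
      exact h₁ p) with hψ
  have hker : LinearMap.ker ψ ≤ LinearMap.ker π := by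
    intro p hp
    rw [LinearMap.mem_ker] at hp ⊢
    apply h₀
    have := congrArg Subtype.val hp
    rwa [hψ, LinearMap.codRestrict_apply, LinearMap.comp_apply, Submodule.mkQ_apply,
      Submodule.coe_zero, Submodule.Quotient.mk_eq_zero] at this
  rw [length_quotient_eq_add_length_ker h, add_comm]
  gcongr
  calc Module.length A R ≤ Module.length A (P ⧸ LinearMap.ker ψ) :=
        Module.length_le_of_surjective ((LinearMap.ker ψ).liftQ π hker) (by
          rw [← LinearMap.range_eq_top, Submodule.range_liftQ, LinearMap.range_eq_top]
          exact hπ)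
    _ = Module.length A (LinearMap.range ψ) := ψ.quotKerEquivRange.length_eq
    _ ≤ _ := Module.length_le_of_injective (LinearMap.range ψ).subtype
        (Submodule.subtype_injective _)

lemma length_quotient_le_add {P R : Type*} [AddCommGroup P] [Module A P] [AddCommGroup R]
    [Module A R] {M₀ M₁ : Ideal A} (h : M₀ ≤ M₁) (φ : P →ₗ[A] A) (π : P →ₗ[A] R)
    (hπ : Function.Surjective π) (h₁ : M₁ ≤ M₀ ⊔ LinearMap.range φ)
    (h₀ : ∀ p, π p = 0 → φ p ∈ M₀) :
    Module.length A (A ⧸ M₀) ≤ Module.length A (A ⧸ M₁) + Module.length A R := by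
  rw [length_quotient_eq_add_length_ker h, add_comm]
  gcongr
  have hker : LinearMap.ker π ≤ LinearMap.ker (M₀.mkQ.comp φ) := by
    intro p hp
    rw [LinearMap.mem_ker, LinearMap.comp_apply, Submodule.mkQ_apply,
      Submodule.Quotient.mk_eq_zero]
    exact h₀ p hp
  have hle : LinearMap.ker (Submodule.factor h) ≤ LinearMap.range (M₀.mkQ.comp φ) := by
    intro x hx
    obtain ⟨x, rfl⟩ := Submodule.mkQ_surjective M₀ x
    rw [LinearMap.mem_ker, Submodule.factor_mk, Submodule.mkQ_apply,
      Submodule.Quotient.mk_eq_zero] at hx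
    obtain ⟨u, hu, _, ⟨p, rfl⟩, rfl⟩ := Submodule.mem_sup.1 (h₁ hx)
    refine ⟨p, ?_⟩
    rw [map_add, (Submodule.Quotient.mk_eq_zero M₀).2 hu |> (Submodule.mkQ_apply M₀ u).trans,
      zero_add]
    rfl
  calc Module.length A (LinearMap.ker (Submodule.factor h))
      ≤ Module.length A (LinearMap.range (M₀.mkQ.comp φ)) :=
        Module.length_le_of_injective (Submodule.inclusion hle)
          (Submodule.inclusion_injective hle)
    _ = Module.length A (P ⧸ LinearMap.ker (M₀.mkQ.comp φ)) :=
        (M₀.mkQ.comp φ).quotKerEquivRange.length_eq.symm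
    _ ≤ Module.length A (P ⧸ LinearMap.ker π) :=
        Module.length_le_of_surjective (Submodule.factor hker) (Submodule.factor_surjective hker)
    _ = _ := (π.quotKerEquivOfSurjective hπ).length_eq

/-- The coefficients of a form of degree `n`, modulo the ideal `J`. -/
noncomputable def coeffsMod (ι : Type*) (n : ℕ) (J : Ideal A) :
    homogeneousSubmodule ι A n →ₗ[A] ({m : ι →₀ ℕ // m.sum (fun _ => id) = n} → A ⧸ J) :=
  LinearMap.pi fun m => J.mkQ.comp ((lcoeff A m.1).comp (homogeneousSubmodule ι A n).subtype)

lemma degree_eq_sum_id {ι : Type*} (m : ι →₀ ℕ) : m.degree = m.sum (fun _ => id) := by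
  rw [Finsupp.degree_apply]; rfl

lemma coeffsMod_eq_zero_iff {ι : Type*} {n : ℕ} {J : Ideal A} (F : homogeneousSubmodule ι A n) :
    coeffsMod ι n J F = 0 ↔ F.1 ∈ J.map C := by
  rw [mem_map_C_iff, funext_iff]
  constructor
  · intro h m
    by_cases hm : m.degree = n
    · have := h ⟨m, (degree_eq_sum_id m).symm.trans hm⟩
      exact (Submodule.Quotient.mk_eq_zero J).1 this
    · rw [IsHomogeneous.coeff_eq_zero F.2 hm]
      exact zero_mem _
  · intro h m
    exact (Submodule.Quotient.mk_eq_zero J).2 (h m.1)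

lemma coeffsMod_surjective (ι : Type*) [Finite ι] (n : ℕ) (J : Ideal A) :
    Function.Surjective (coeffsMod ι n J) := by
  classical
  cases nonempty_fintype ι
  have : Fintype {m : ι →₀ ℕ // m.sum (fun _ => id) = n} :=
    Fintype.ofEquiv _ (Sym.equivNatSum ι n)
  intro v
  choose c hc using fun s => Submodule.Quotient.mk_surjective J (v s)
  refine ⟨⟨∑ s, monomial s.1 (c s), ?_⟩, ?_⟩
  · exact sum_mem fun s _ => isHomogeneous_monomial _ ((degree_eq_sum_id s.1).trans s.2)
  · funext s
    rw [← hc]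
    change Submodule.Quotient.mk (coeff s.1 (∑ t, monomial t.1 (c t))) = _
    congr 1
    rw [coeff_sum, Finset.sum_eq_single s]
    · simp
    · intro t _ ht
      rw [coeff_monomial, if_neg fun h => ht (Subtype.ext h)]
    · simp

lemma length_coeffsMod (ι : Type*) [Fintype ι] (n : ℕ) (J : Ideal A) :
    Module.length A ({m : ι →₀ ℕ // m.sum (fun _ => id) = n} → A ⧸ J) =
      (Fintype.card ι).multichoose n * Module.length A (A ⧸ J) := by
  classical
  rw [Module.length_pi, ENat.card_congr (Sym.equivNatSum ι n).symm, ENat.card_eq_coe_fintype_card,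
    Sym.card_sym_eq_multichoose]

/-- Multiples of `w` by the values at `b` of the forms of degree `n`. -/
noncomputable def evalMul {ι : Type*} (b : ι → A) (n : ℕ) (w : A) :
    homogeneousSubmodule ι A n →ₗ[A] A :=
  (LinearMap.mulRight A w).comp ((aeval b).toLinearMap.comp (homogeneousSubmodule ι A n).subtype)

lemma evalMul_apply {ι : Type*} (b : ι → A) (n : ℕ) (w : A) (F : homogeneousSubmodule ι A n) :
    evalMul b n w F = eval b F.1 * w := by
  simp [evalMul]

lemma length_add_multichoose_le {ι : Type*} [Fintype ι] (b : ι → A) (n : ℕ) (w : A)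
    {M₀ M₁ J : Ideal A} (h : M₀ ≤ M₁)
    (h₁ : ∀ F : MvPolynomial ι A, F.IsHomogeneous n → eval b F * w ∈ M₁)
    (h₀ : ∀ F : MvPolynomial ι A, F.IsHomogeneous n → eval b F * w ∈ M₀ → F ∈ J.map C) :
    Module.length A (A ⧸ M₁) + (Fintype.card ι).multichoose n * Module.length A (A ⧸ J) ≤
      Module.length A (A ⧸ M₀) := by
  rw [← length_coeffsMod]
  refine length_add_le_length_quotient h (evalMul b n w) (coeffsMod ι n J)
    (coeffsMod_surjective ι n J) (fun F => ?_) (fun F hF => ?_)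
  · rw [evalMul_apply]; exact h₁ F.1 F.2
  · rw [coeffsMod_eq_zero_iff]
    rw [evalMul_apply] at hF
    exact h₀ F.1 F.2 hF

lemma length_eq_add_multichoose {ι : Type*} [Fintype ι] (b : ι → A) (n : ℕ) (w : A)
    {M₀ M₁ J : Ideal A} (h₁ : M₁ = M₀ ⊔ Ideal.span {w} * Ideal.span (Set.range b) ^ n)
    (h₀ : ∀ F : MvPolynomial ι A, F.IsHomogeneous n → (eval b F * w ∈ M₀ ↔ F ∈ J.map C)) :
    Module.length A (A ⧸ M₀) =
      Module.length A (A ⧸ M₁) + (Fintype.card ι).multichoose n * Module.length A (A ⧸ J) := by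
  have hle : M₀ ≤ M₁ := h₁ ▸ le_sup_left
  apply le_antisymm
  · rw [← length_coeffsMod]
    refine length_quotient_le_add hle (evalMul b n w) (coeffsMod ι n J)
      (coeffsMod_surjective ι n J) ?_ (fun F hF => ?_)
    · rw [h₁]
      refine sup_le_sup_left (fun x hx => ?_) _
      obtain ⟨y, hy, rfl⟩ := Ideal.mem_span_singleton_mul.1 hx
      obtain ⟨F, hF, rfl⟩ := exists_eval_eq_of_mem_span_range_pow hy
      exact ⟨⟨F, hF⟩, by rw [evalMul_apply, mul_comm]⟩
    · rw [coeffsMod_eq_zero_iff] at hF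
      rw [evalMul_apply]
      exact (h₀ F.1 F.2).2 hF
  · refine length_add_multichoose_le b n w hle (fun F hF => ?_) fun F hF => (h₀ F hF).1
    rw [h₁, mul_comm (eval b F)]
    exact Ideal.mem_sup_right (Ideal.mul_mem_mul (Ideal.mem_span_singleton_self w)
      (eval_mem_span_range_pow hF))

end Lengths

section Numerics

lemma multichoose_mono_left {p q : ℕ} (h : p ≤ q) (n : ℕ) :
    p.multichoose n ≤ q.multichoose n := by
  rw [Nat.multichoose_eq, Nat.multichoose_eq]
  exact Nat.choose_le_choose n (by omega)

lemma multichoose_mono_right {p : ℕ} (hp : 1 ≤ p) : Monotone p.multichoose := by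
  obtain ⟨p, rfl⟩ := Nat.exists_eq_add_of_le' hp
  refine monotone_nat_of_le_succ fun n => ?_
  rw [Nat.multichoose_succ_succ]
  omega

lemma multichoose_succ_eq_choose (p n : ℕ) : (p + 1).multichoose n = (n + p).choose p := by
  rw [Nat.multichoose_eq, Nat.choose_symm_of_eq_add (b := p) (by omega)]
  congr 1
  omega

lemma multichoose_add_le (p n r : ℕ) :
    (p + 1).multichoose (n + r) ≤ (p + 1).multichoose n + r * p.multichoose (n + r) := by
  induction r with
  | zero => simp
  | succ r ih =>
    rw [← add_assoc, Nat.multichoose_succ_succ]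
    have h : r * p.multichoose (n + r) ≤ r * p.multichoose (n + r + 1) := by
      rcases Nat.eq_zero_or_pos p with rfl | hp
      · rcases Nat.eq_zero_or_pos r with rfl | hr
        · simp
        · obtain ⟨t, rfl⟩ := Nat.exists_eq_add_of_le' hr
          simp [← add_assoc]
      · exact Nat.mul_le_mul_left _ (multichoose_mono_right hp (Nat.le_succ _))
    have : (r + 1) * p.multichoose (n + r + 1) =
      r * p.multichoose (n + r + 1) + p.multichoose (n + r + 1) := by ring
    omega

lemma nonneg_of_multichoose {p : ℕ} {b B : ℤ} {N : ℕ}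
    (h : ∀ n ≥ N, 0 ≤ b * (p + 1).multichoose n + B * p.multichoose n) : 0 ≤ b := by
  by_contra! hb
  rcases Nat.eq_zero_or_pos p with rfl | hp
  · have := h (N + 1) (by omega)
    simp at this
    omega
  · obtain ⟨p, rfl⟩ := Nat.exists_eq_add_of_le' hp
    set n := N + (B * (p + 1)).toNat + 1 with hn
    have h1 := h n (by omega)
    have h2 : (p + 1) * (p + 1 + 1).multichoose n = (n + p + 1) * (p + 1).multichoose n := by
      rw [multichoose_succ_eq_choose, multichoose_succ_eq_choose, mul_comm]
      exact (Nat.add_one_mul_choose_eq (n + p) p).symm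
    have h3 : 0 < (p + 1).multichoose n := by
      rw [multichoose_succ_eq_choose]; exact Nat.choose_pos (by omega)
    have h4 : B * (p + 1) < n := by omega
    zify at h2 h3
    have h5 : 0 ≤ ((p : ℤ) + 1) * (b * (p + 1 + 1).multichoose n + B * (p + 1).multichoose n) :=
      mul_nonneg (by omega) h1
    have h6 : ((p : ℤ) + 1) * (b * (p + 1 + 1).multichoose n + B * (p + 1).multichoose n) =
        (b * (n + p + 1) + B * (p + 1)) * (p + 1).multichoose n := by
      linear_combination b * h2
    rw [h6] at h5
    have h7 := nonneg_of_mul_nonneg_left h5 h3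
    nlinarith

lemma abs_sum_multichoose_le (b : ℕ → ℤ) (d t n : ℕ) :
    |∑ i ∈ Finset.Ico t (d + 1), b i * ((d - i + 1).multichoose n : ℤ)| ≤
      (∑ i ∈ Finset.Ico t (d + 1), |b i|) * ((d + 1 - t).multichoose n : ℤ) := by
  rw [Finset.sum_mul]
  refine (Finset.abs_sum_le_sum_abs _ _).trans (Finset.sum_le_sum fun i hi => ?_)
  rw [Finset.mem_Ico] at hi
  rw [abs_mul, Nat.abs_cast]
  gcongr
  exact multichoose_mono_left (by omega) n

lemma eq_zero_of_sum_multichoose_eq_zero {b : ℕ → ℤ} {d N : ℕ}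
    (h : ∀ n ≥ N, ∑ i ∈ Finset.range (d + 1), b i * ((d - i + 1).multichoose n : ℤ) = 0) :
    ∀ i ≤ d, b i = 0 := by
  intro i
  induction i using Nat.strong_induction_on with
  | _ i ih =>
  intro hi
  have key : ∀ n ≥ N, b i * ((d - i + 1).multichoose n : ℤ) +
      ∑ j ∈ Finset.Ico (i + 1) (d + 1), b j * ((d - j + 1).multichoose n : ℤ) = 0 := by
    intro n hn
    rw [← h n hn, Finset.range_eq_Ico,
      ← Finset.sum_Ico_consecutive _ (Nat.zero_le i) (show i ≤ d + 1 by omega),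
      Finset.sum_eq_sum_Ico_succ_bot (show i < d + 1 by omega),
      Finset.sum_eq_zero (s := Finset.Ico 0 i), zero_add]
    intro j hj
    rw [Finset.mem_Ico] at hj
    rw [ih j hj.2 (by omega), zero_mul]
  have hle := fun n => abs_le.1 (abs_sum_multichoose_le b d (i + 1) n)
  simp only [Nat.add_sub_add_right] at hle
  apply le_antisymm
  · have : 0 ≤ -b i := nonneg_of_multichoose (p := d - i) (N := N)
      (B := ∑ j ∈ Finset.Ico (i + 1) (d + 1), |b j|) fun n hn => by
      linarith [key n hn, (hle n).1, (hle n).2]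
    linarith
  · exact nonneg_of_multichoose (p := d - i) (N := N)
      (B := ∑ j ∈ Finset.Ico (i + 1) (d + 1), |b j|) fun n hn => by
      linarith [key n hn, (hle n).1, (hle n).2]

end Numerics

section HilbertPolynomial

lemma sum_choose_eq_sum_multichoose (e : ℕ → ℤ) (d n : ℕ) :
    ∑ i ∈ Finset.range (d + 1), (-1) ^ i * e i * ((n + d - i).choose (d - i) : ℤ) =
      ∑ i ∈ Finset.range (d + 1), ((-1) ^ i * e i) * ((d - i + 1).multichoose n : ℤ) := by
  refine Finset.sum_congr rfl fun i hi => ?_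
  rw [Finset.mem_range] at hi
  rw [multichoose_succ_eq_choose, Nat.add_sub_assoc (by omega)]

lemma leading_coeff_eq {b : ℕ → ℤ} {d N r q : ℕ} {H : ℕ → ℕ}
    (hH : ∀ n ≥ N, (H n : ℤ) =
      ∑ i ∈ Finset.range (d + 1), b i * ((d - i + 1).multichoose n : ℤ))
    (hle : ∀ n, H n ≤ q * (d + 1).multichoose n)
    (hge : ∀ n, q * (d + 1).multichoose n ≤ H (n + r)) : b 0 = q := by
  have hsplit : ∀ n ≥ N, (H n : ℤ) = b 0 * (d + 1).multichoose n +
      ∑ i ∈ Finset.Ico 1 (d + 1), b i * ((d - i + 1).multichoose n : ℤ) := by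
    intro n hn
    rw [hH n hn, Finset.range_eq_Ico, Finset.sum_eq_sum_Ico_succ_bot (by omega)]
    simp
  have habs := fun n => abs_le.1 (abs_sum_multichoose_le b d 1 n)
  simp only [Nat.add_sub_cancel] at habs
  set B := ∑ i ∈ Finset.Ico 1 (d + 1), |b i|
  apply le_antisymm
  · have : 0 ≤ (q : ℤ) - b 0 := nonneg_of_multichoose (p := d) (N := N) (B := B) fun n hn => by
      have h1 : (H n : ℤ) ≤ q * (d + 1).multichoose n := by exact_mod_cast hle n
      linarith [hsplit n hn, (habs n).1]
    linarith
  · have : 0 ≤ b 0 - q :=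
        nonneg_of_multichoose (p := d) (N := N + r) (B := B + q * r) fun n hn => by
      obtain ⟨n, rfl⟩ := Nat.exists_eq_add_of_le' (show r ≤ n by omega)
      have h1 : (q * (d + 1).multichoose n : ℤ) ≤ H (n + r) := by exact_mod_cast hge n
      have h2 : (q * (d + 1).multichoose (n + r) : ℤ) ≤
          q * ((d + 1).multichoose n + r * d.multichoose (n + r)) := by
        exact_mod_cast Nat.mul_le_mul_left q (multichoose_add_le d n r)
      linarith [hsplit (n + r) (by omega), (habs (n + r)).2]
    linarith

lemma exists_abs_sub_le {b : ℕ → ℤ} {p N q h : ℕ} {H : ℕ → ℕ}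
    (hH : ∀ n ≥ N, (H n : ℤ) =
      ∑ i ∈ Finset.range (p + 1 + 1), b i * ((p + 1 - i + 1).multichoose n : ℤ))
    (h0 : b 0 = q) (h1 : b 1 = -(q - h + 1)) :
    ∃ B : ℤ, ∀ n ≥ N, |(q * (p + 2).multichoose n - (q - h) * (p + 1).multichoose n - H n) -
      ((p + 1).multichoose n : ℤ)| ≤ B * p.multichoose n := by
  refine ⟨∑ i ∈ Finset.Ico 2 (p + 1 + 1), |b i|, fun n hn => ?_⟩
  have habs := abs_sum_multichoose_le b (p + 1) 2 n
  rw [show p + 1 + 1 - 2 = p by omega] at habs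
  convert habs using 1
  rw [← abs_neg]
  congr 1
  rw [hH n hn, Finset.range_eq_Ico, Finset.sum_eq_sum_Ico_succ_bot (by omega),
    Finset.sum_eq_sum_Ico_succ_bot (by omega), h0, h1]
  simp only [Nat.sub_zero, Nat.add_sub_cancel, zero_add, Nat.reduceAdd]
  ring

lemma not_abs_sub_multichoose_le {p N : ℕ} {S : ℕ → ℤ} {B : ℤ}
    (hS : ∀ n ≥ N, |S n - ((p + 1).multichoose n : ℤ)| ≤ B * p.multichoose n)
    (h : ∀ n, S n ≤ 0) : False := by
  have : (0 : ℤ) ≤ -1 := nonneg_of_multichoose (p := p) (N := N) (B := B) fun n hn => by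
    linarith [(abs_le.1 (hS n hn)).1, h n]
  omega

lemma not_multichoose_add_multichoose_le {p N i : ℕ} {S : ℕ → ℤ} {B : ℤ}
    (hS : ∀ n ≥ N, |S n - ((p + 1).multichoose n : ℤ)| ≤ B * p.multichoose n)
    (h : ∀ k, ((p + 1).multichoose (k + i) + (p + 1).multichoose k : ℤ) ≤ S (k + i + 1)) :
    False := by
  have : (0 : ℤ) ≤ -1 := nonneg_of_multichoose (p := p) (N := N + i + 1) (B := B + i + 2)
    fun n hn => by
      obtain ⟨k, rfl⟩ := Nat.exists_eq_add_of_le' (show i + 1 ≤ n by omega)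
      have h1 := multichoose_add_le p (k + i) 1
      have h2 := multichoose_add_le p k (i + 1)
      zify at h1 h2
      rw [← add_assoc] at *
      linarith [(abs_le.1 (hS _ (show k + i + 1 ≥ N by omega))).2, h k]
  omega

lemma hilbert_coefficients_eq {e : ℕ → ℤ} {d N c : ℕ} {q h : ℤ} {H : ℕ → ℕ} (hc : 0 < c)
    (hcd : c < d)
    (hH : ∀ n ≥ N, (H n : ℤ) =
      ∑ i ∈ Finset.range (d + 1), ((-1) ^ i * e i) * ((d - i + 1).multichoose n : ℤ))
    (hH' : ∀ n, (H n : ℤ) = q * (d + 1).multichoose n - h * d.multichoose n +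
      (d - c).multichoose n) :
    e 0 = q ∧ e 1 = h ∧ e (c + 1) = (-1) ^ (c + 1) ∧
      ∀ i : ℕ, 2 ≤ i → i ≤ d → i ≠ c + 1 → e i = 0 := by
  set b' : ℕ → ℤ := fun i => if i = 0 then q else if i = 1 then -h else if i = c + 1 then 1 else 0
  have hb' : ∀ n, (H n : ℤ) =
      ∑ i ∈ Finset.range (d + 1), b' i * ((d - i + 1).multichoose n : ℤ) := by
    intro n
    rw [hH' n, Finset.range_eq_Ico, Finset.sum_eq_sum_Ico_succ_bot (by omega),
      Finset.sum_eq_sum_Ico_succ_bot (by omega), Finset.sum_eq_single (c + 1)]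
    · simp only [b', Nat.sub_zero, if_true, zero_add, if_neg one_ne_zero,
        if_neg (Nat.succ_ne_zero c), if_neg (show ¬ c + 1 = 1 by omega)]
      rw [Nat.sub_add_cancel (by omega), show d - (c + 1) + 1 = d - c by omega]
      ring
    · intro i hi hic
      rw [Finset.mem_Ico] at hi
      simp only [b', if_neg (show ¬ i = 0 by omega), if_neg (show ¬ i = 1 by omega), if_neg hic,
        zero_mul]
    · intro hi
      exact (hi (Finset.mem_Ico.2 ⟨by omega, by omega⟩)).elim
  have key : ∀ i ≤ d, (-1) ^ i * e i - b' i = 0 :=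
    eq_zero_of_sum_multichoose_eq_zero (N := N) fun n hn => by
      simp only [sub_mul, Finset.sum_sub_distrib]
      rw [← hH n hn, ← hb' n, sub_self]
  have hmul : ∀ i ≤ d, e i = (-1) ^ i * b' i := by
    intro i hi
    have h1 : ((-1 : ℤ) ^ i) * (-1) ^ i = 1 := by rw [← mul_pow]; simp
    linear_combination (-1) ^ i * key i hi - e i * h1
  refine ⟨?_, ?_, ?_, fun i hi hid hic => ?_⟩
  · rw [hmul 0 (by omega)]; simp [b']
  · rw [hmul 1 (by omega)]; simp [b']
  · rw [hmul (c + 1) (by omega)]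
    simp [b', show ¬ c = 0 by omega]
  · rw [hmul i hid]
    simp [b', show ¬ i = 0 by omega, show ¬ i = 1 by omega, hic]

end HilbertPolynomial

section SocleModule

open MvPolynomial

variable {A : Type*} [CommRing A]

lemma exists_socle_mod [IsLocalRing A] {J K : Ideal A} (hJK : ¬ K ≤ J)
    (hs : ∃ s, maximalIdeal A ^ s ≤ J) :
    ∃ w ∈ K, w ∉ J ∧ ∀ r ∈ maximalIdeal A, r * w ∈ J := by
  classical
  have hs' : ∃ s, maximalIdeal A ^ s * K ≤ J :=
    hs.imp fun s h =>
      (Ideal.mul_le_right.trans h : K * maximalIdeal A ^ s ≤ J).trans' (mul_comm _ _).le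
  have h0 : Nat.find hs' ≠ 0 := by
    intro h0
    have := Nat.find_spec hs'
    rw [h0, pow_zero, one_mul] at this
    exact hJK this
  obtain ⟨s, hs1⟩ := Nat.exists_eq_succ_of_ne_zero h0
  have hlt : ¬ maximalIdeal A ^ s * K ≤ J := Nat.find_min hs' (by omega)
  obtain ⟨w, hw, hwJ⟩ := SetLike.not_le_iff_exists.1 hlt
  have hle : maximalIdeal A ^ s * K ≤ K := Ideal.mul_le_right
  refine ⟨w, hle hw, hwJ, fun r hr => ?_⟩
  have := Nat.find_spec hs'
  rw [hs1, pow_succ', mul_assoc] at this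
  exact this (Ideal.mul_mem_mul hr hw)

lemma pow_succ_eq_mul_pow {I Q : Ideal A} (h : I ^ 2 = I * Q) (n : ℕ) :
    I ^ (n + 1) = I * Q ^ n := by
  induction n with
  | zero => simp
  | succ n ih =>
    rw [pow_succ', ih, ← mul_assoc, ← sq, h, mul_assoc, ← pow_succ']

lemma mul_pow_le_pow_succ {I Q : Ideal A} (hQI : Q ≤ I) (n : ℕ) : I * Q ^ n ≤ I ^ (n + 1) := by
  rw [pow_succ']
  exact Ideal.mul_mono_right (Ideal.pow_right_mono hQI n)

lemma mem_sup_of_isUnit {I Q : Ideal A} {n i : ℕ} {u v x y z : A} (hu : IsUnit u)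
    (hv : v ∈ Q ^ i) (hy : y - v * z ∈ I * Q ^ (n + i)) (hx : x - u * z ∈ I * Q ^ n) :
    y ∈ I * Q ^ (n + i) ⊔ Ideal.span {x} * Q ^ i := by
  obtain ⟨u, rfl⟩ := hu
  have h1 : x * (v * ↑u⁻¹) ∈ Ideal.span {x} * Q ^ i :=
    Ideal.mul_mem_mul (Ideal.mem_span_singleton_self x) (Ideal.mul_mem_right _ _ hv)
  have h2 : (x - u * z) * (v * ↑u⁻¹) ∈ I * Q ^ (n + i) := by
    rw [pow_add, ← mul_assoc]
    exact Ideal.mul_mem_mul hx (Ideal.mul_mem_right _ _ hv)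
  have h3 := add_mem (Ideal.mem_sup_left (sub_mem hy h2) :
    _ ∈ I * Q ^ (n + i) ⊔ Ideal.span {x} * Q ^ i) (Ideal.mem_sup_right h1)
  convert h3 using 1
  linear_combination (-(v * z)) * u.mul_inv

lemma length_quotient_maximalIdeal [IsLocalRing A] :
    Module.length A (A ⧸ maximalIdeal A) = 1 := by
  have : IsSimpleModule A (A ⧸ maximalIdeal A) :=
    isSimpleModule_iff_isCoatom.2 (maximalIdeal.isMaximal A).out
  exact Module.length_eq_one A _

variable {ι : Type*} {a : ι → A}

lemma isUnit_eval_of_isHomogeneous_zero [IsLocalRing A] {F : MvPolynomial ι A}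
    (hF : F.IsHomogeneous 0) (hF0 : map (residue A) F ≠ 0) : IsUnit (eval a F) := by
  rw [← totalDegree_zero_iff_isHomogeneous, totalDegree_eq_zero_iff_eq_C] at hF
  rw [hF, eval_C]
  rw [hF, map_C] at hF0
  by_contra h
  exact hF0 (by rw [(residue_eq_zero_iff _).2 ((mem_maximalIdeal _).2 h), map_zero])

lemma QuasiRegularOn.eval_mem_mul_pow_iff (hq : QuasiRegularOn a Set.univ) {J : Ideal A}
    (hJ : Ideal.span (Set.range a) ≤ J) {F : MvPolynomial ι A} {n : ℕ} (hF : F.IsHomogeneous n) :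
    eval a F ∈ J * Ideal.span (Set.range a) ^ n ↔ F ∈ J.map C :=
  ⟨hq.mem_map_C hJ hF, eval_mem_mul_span_range_pow hF⟩

lemma QuasiRegularOn.length_quotient_mul_pow [Fintype ι] (hq : QuasiRegularOn a Set.univ)
    {J : Ideal A} (hJ : Ideal.span (Set.range a) ≤ J) (n : ℕ) :
    Module.length A (A ⧸ J * Ideal.span (Set.range a) ^ n) =
      Module.length A (A ⧸ Ideal.span (Set.range a) ^ n) +
        (Fintype.card ι).multichoose n * Module.length A (A ⧸ J) := by
  refine length_eq_add_multichoose a n 1 ?_ fun F hF => ?_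
  · rw [Ideal.span_singleton_one, Ideal.top_mul]
    exact (sup_eq_right.2 Ideal.mul_le_right).symm
  · rw [mul_one, hq.eval_mem_mul_pow_iff hJ hF]

lemma QuasiRegularOn.length_quotient_pow_succ [Fintype ι] (hq : QuasiRegularOn a Set.univ)
    (n : ℕ) :
    Module.length A (A ⧸ Ideal.span (Set.range a) ^ (n + 1)) =
      (Fintype.card ι + 1).multichoose n * Module.length A (A ⧸ Ideal.span (Set.range a)) := by
  induction n with
  | zero => rw [zero_add, pow_one, Nat.multichoose_zero_right, Nat.cast_one, one_mul]
  | succ n ih =>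
    rw [pow_succ', hq.length_quotient_mul_pow le_rfl, ih, Nat.multichoose_succ_succ, Nat.cast_add,
      add_mul, add_comm]

variable [IsLocalRing A] [IsNoetherianRing A]

namespace IsQuasiRegularParameters

lemma eval_mul_mem_iff (ha : IsQuasiRegularParameters a) {I : Ideal A}
    (hI : Ideal.span (Set.range a) ≤ I) {m : ℕ} {w : A}
    (hw : w ∉ I * Ideal.span (Set.range a) ^ m)
    (hmw : ∀ r ∈ maximalIdeal A, r * w ∈ I * Ideal.span (Set.range a) ^ m) {n : ℕ}
    {F : MvPolynomial ι A} (hF : F.IsHomogeneous n) :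
    eval a F * w ∈ I * Ideal.span (Set.range a) ^ (m + n) ↔ F ∈ (maximalIdeal A).map C := by
  constructor
  · intro h
    by_contra hF0
    exact hw (ha.mem_of_eval_mul_mem hI hF (mt map_residue_eq_zero_iff.1 hF0) h)
  · intro h
    rw [pow_add, ← mul_assoc]
    exact eval_mul_mem_of_mem_map_C hF h hmw

/-- A strict inequality between colengths forces the fibre of the associated Sally module to
have rank at most one. -/
lemma exists_eval_mul_sub_mem [Fintype ι] (ha : IsQuasiRegularParameters a) {I : Ideal A}
    (hI : Ideal.span (Set.range a) ≤ I) {w : A} (hwI : w ∈ I ^ 2)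
    (hw : w ∉ I * Ideal.span (Set.range a)) {i : ℕ} {y : A} (hy : y ∈ I ^ (i + 2))
    (hlen : ∃ k, ¬ Module.length A (A ⧸ I ^ (k + i + 2)) +
      ((Fintype.card ι).multichoose (k + i) : ℕ∞) + ((Fintype.card ι).multichoose k : ℕ∞) ≤
        Module.length A (A ⧸ I * Ideal.span (Set.range a) ^ (k + i + 1))) :
    ∃ (k : ℕ) (f g : MvPolynomial ι A), f.IsHomogeneous k ∧ g.IsHomogeneous (k + i) ∧
      map (residue A) f ≠ 0 ∧
      eval a f * y - eval a g * w ∈ I * Ideal.span (Set.range a) ^ (1 + k + i) := by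
  by_contra! hcon
  obtain ⟨k, hk⟩ := hlen
  apply hk
  set Q := Ideal.span (Set.range a) with hQ
  have hwQ : Ideal.span {w} * Q ^ (k + i) ≤ I ^ (k + i + 2) := by
    rw [add_comm (k + i) 2, pow_add I]
    exact Ideal.mul_mono ((Ideal.span_singleton_le_iff_mem _).2 hwI) (Ideal.pow_right_mono hI _)
  set M : Ideal A := I * Q ^ (k + i + 1) ⊔ Ideal.span {w} * Q ^ (k + i) with hM
  have hle₁ : I * Q ^ (k + i + 1) ≤ M := le_sup_left
  have hle₂ : M ≤ I ^ (k + i + 2) := sup_le (mul_pow_le_pow_succ hI _) hwQ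
  have h₁ : Module.length A (A ⧸ M) + (Fintype.card ι).multichoose (k + i) *
      Module.length A (A ⧸ maximalIdeal A) ≤ Module.length A (A ⧸ I * Q ^ (k + i + 1)) := by
    refine length_add_multichoose_le a (k + i) w hle₁ (fun F hF => ?_) (fun F hF h => ?_)
    · rw [mul_comm]
      exact Ideal.mem_sup_right (Ideal.mul_mem_mul (Ideal.mem_span_singleton_self w)
        (eval_mem_span_range_pow hF))
    · by_contra hF0
      rw [add_comm (k + i) 1] at h
      have := ha.mem_of_eval_mul_mem hI hF (mt map_residue_eq_zero_iff.1 hF0) h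
      rw [pow_one] at this
      exact hw this
  have h₂ : Module.length A (A ⧸ I ^ (k + i + 2)) + (Fintype.card ι).multichoose k *
      Module.length A (A ⧸ maximalIdeal A) ≤ Module.length A (A ⧸ M) := by
    refine length_add_multichoose_le a k y hle₂ (fun F hF => ?_) (fun F hF h => ?_)
    · rw [show k + i + 2 = k + (i + 2) by ring, pow_add]
      have hQI : Q ^ k ≤ I ^ k := Ideal.pow_right_mono hI k
      exact Ideal.mul_mem_mul (hQI (eval_mem_span_range_pow hF)) hy
    · by_contra hF0
      obtain ⟨u, hu, v, hv, huv⟩ := Submodule.mem_sup.1 h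
      obtain ⟨q, hq, rfl⟩ := Ideal.mem_span_singleton_mul.1 hv
      obtain ⟨g, hg, rfl⟩ := exists_eval_eq_of_mem_span_range_pow hq
      refine hcon k F g hF hg (mt map_residue_eq_zero_iff.1 hF0) ?_
      rw [← huv, mul_comm w, add_sub_cancel_right, show 1 + k + i = k + i + 1 by ring]
      exact hu
  rw [length_quotient_maximalIdeal, mul_one] at h₁ h₂
  calc _ = Module.length A (A ⧸ I ^ (k + i + 2)) + ((Fintype.card ι).multichoose k : ℕ∞) +
        ((Fintype.card ι).multichoose (k + i) : ℕ∞) := by ring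
    _ ≤ _ := by gcongr
    _ ≤ _ := h₁

lemma mul_mem_of_eval_mul_sub_mem (ha : IsQuasiRegularParameters a) {I : Ideal A}
    (hI : Ideal.span (Set.range a) ≤ I) {n k i : ℕ} {x y : A}
    (hx : ∀ r ∈ maximalIdeal A, r * x ∈ I * Ideal.span (Set.range a) ^ n)
    {f g : MvPolynomial ι A} (hf : f.IsHomogeneous k) (hg : g.IsHomogeneous (k + i))
    (hf0 : map (residue A) f ≠ 0)
    (h : eval a f * y - eval a g * x ∈ I * Ideal.span (Set.range a) ^ (n + k + i)) :
    ∀ r ∈ maximalIdeal A, r * y ∈ I * Ideal.span (Set.range a) ^ (n + i) := by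
  intro r hr
  refine ha.mem_of_eval_mul_mem hI hf hf0 ?_
  rw [add_right_comm n i k]
  have h1 := Ideal.mul_mem_left _ r h
  have h2 : r * x * eval a g ∈ I * Ideal.span (Set.range a) ^ (n + k + i) := by
    rw [add_assoc n, pow_add, ← mul_assoc]
    exact Ideal.mul_mem_mul (hx r hr) (eval_mem_span_range_pow hg)
  have := add_mem h1 h2
  convert this using 1
  ring

lemma mem_sup_of_eval_mul_sub_mem (ha : IsQuasiRegularParameters a) {I : Ideal A}
    (hI : Ideal.span (Set.range a) ≤ I) {k i : ℕ} {x y : A}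
    (hx : ∀ r ∈ maximalIdeal A, r * x ∈ I) (hx' : x ∉ I)
    {f g : MvPolynomial ι A} (hf : f.IsHomogeneous k) (hg : g.IsHomogeneous (k + i))
    (hf0 : map (residue A) f ≠ 0)
    (h : eval a f * y - eval a g * x ∈ I * Ideal.span (Set.range a) ^ (k + i)) :
    y ∈ I * Ideal.span (Set.range a) ^ i ⊔ Ideal.span {x} * Ideal.span (Set.range a) ^ i := by
  have hpow : I * Ideal.span (Set.range a) ^ 0 = I := by rw [pow_zero, mul_one]
  rw [← zero_add (k + i), ← add_assoc] at h
  rw [← hpow] at hx hx'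
  obtain ⟨k', F, G, z, hk', hF, hG, hF0, hyz, hxz⟩ := ha.exists_lowest_terms hI hx hx'
    (ha.mul_mem_of_eval_mul_sub_mem hI hx hf hg hf0 h) hf hg hf0 h
  obtain rfl : k' = 0 := by omega
  rw [zero_add] at hG
  have := mem_sup_of_isUnit (isUnit_eval_of_isHomogeneous_zero hF hF0)
    (eval_mem_span_range_pow hG) hyz hxz
  rwa [zero_add] at this

end IsQuasiRegularParameters

end SocleModule

section AdaptedGenerators

variable {A : Type*} [CommRing A] [IsLocalRing A]

/-- The vectors over the residue field that are the coefficient vectors, in the generators `a`,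
of elements of `L` modulo `𝔪 (a)`. -/
def coeffSubspace {ι : Type*} [Fintype ι] (a : ι → A) (L : Ideal A) :
    Submodule (ResidueField A) (ι → ResidueField A) where
  carrier := {v | ∃ u : ι → A, (∀ i, residue A (u i) = v i) ∧ ∑ i, u i * a i ∈ L}
  add_mem' := by
    rintro _ _ ⟨u, hu, huL⟩ ⟨v, hv, hvL⟩
    refine ⟨u + v, fun i => by rw [Pi.add_apply, map_add, hu, hv, Pi.add_apply], ?_⟩
    simp only [Pi.add_apply, add_mul, Finset.sum_add_distrib]
    exact add_mem huL hvL
  zero_mem' := ⟨0, by simp, by simp⟩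
  smul_mem' := by
    rintro s _ ⟨u, hu, huL⟩
    obtain ⟨r, rfl⟩ := residue_surjective s
    refine ⟨r • u, fun i => by rw [Pi.smul_apply, smul_eq_mul, map_mul, hu]; rfl, ?_⟩
    simp only [Pi.smul_apply, smul_eq_mul, mul_assoc, ← Finset.mul_sum]
    exact Ideal.mul_mem_left _ _ huL

lemma sum_mul_mem_maximalIdeal_mul {ι : Type*} [Fintype ι] {a : ι → A} {u : ι → A}
    (hu : ∀ i, residue A (u i) = 0) :
    ∑ i, u i * a i ∈ maximalIdeal A * Ideal.span (Set.range a) :=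
  sum_mem fun i _ => Ideal.mul_mem_mul ((residue_eq_zero_iff _).1 (hu i))
    (Ideal.subset_span ⟨i, rfl⟩)

lemma exists_adapted_generators {ι : Type*} [Fintype ι] (a : ι → A) {L : Ideal A}
    (hmL : maximalIdeal A * Ideal.span (Set.range a) ≤ L) (hL : L ≤ Ideal.span (Set.range a)) :
    ∃ (p q : ℕ) (b : Fin p ⊕ Fin q → A), p + q = Fintype.card ι ∧
      Ideal.span (Set.range b) = Ideal.span (Set.range a) ∧
      L = Ideal.span (Set.range (b ∘ Sum.inl)) ⊔
        maximalIdeal A * Ideal.span (Set.range a) := by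
  classical
  set V := coeffSubspace a L with hV
  obtain ⟨W, hW⟩ := Submodule.exists_isCompl V
  let bV := Module.finBasis (ResidueField A) V
  let bW := Module.finBasis (ResidueField A) W
  choose uV huV huVL using fun j => (bV j).2
  have hlift : ∀ v : ι → ResidueField A, ∃ u : ι → A, ∀ i, residue A (u i) = v i := fun v =>
    ⟨fun i => (residue_surjective (v i)).choose, fun i => (residue_surjective (v i)).choose_spec⟩
  choose uW huW using fun j => hlift (bW j)
  let b := Sum.elim (fun j => ∑ i, uV j i * a i) (fun j => ∑ i, uW j i * a i)
  have hsum : ∀ {κ : Type} [Fintype κ] (s : κ → A) (t : κ → ι → A),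
      ∑ i, (∑ j, s j * t j i) * a i = ∑ j, s j * ∑ i, t j i * a i := by
    intro κ _ s t
    simp only [Finset.sum_mul, Finset.mul_sum, mul_assoc]
    exact Finset.sum_comm
  have hbV : ∀ v ∈ V, ∃ s : Fin _ → A, ∀ i, residue A (∑ j, s j * uV j i) = v i := by
    intro v hv
    choose s hs using fun j => residue_surjective (bV.repr ⟨v, hv⟩ j)
    refine ⟨s, fun i => ?_⟩
    have := congrArg (fun x : V => (x : ι → ResidueField A) i) (bV.sum_repr ⟨v, hv⟩)
    simp only [Submodule.coe_sum, Finset.sum_apply, Submodule.coe_smul, Pi.smul_apply,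
      smul_eq_mul] at this
    rw [← this, map_sum]
    exact Finset.sum_congr rfl fun j _ => by rw [map_mul, hs, huV]
  have hbW : ∀ v ∈ W, ∃ s : Fin _ → A, ∀ i, residue A (∑ j, s j * uW j i) = v i := by
    intro v hv
    choose s hs using fun j => residue_surjective (bW.repr ⟨v, hv⟩ j)
    refine ⟨s, fun i => ?_⟩
    have := congrArg (fun x : W => (x : ι → ResidueField A) i) (bW.sum_repr ⟨v, hv⟩)
    simp only [Submodule.coe_sum, Finset.sum_apply, Submodule.coe_smul, Pi.smul_apply,
      smul_eq_mul] at this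
    rw [← this, map_sum]
    exact Finset.sum_congr rfl fun j _ => by rw [map_mul, hs, huW]
  have hmem : ∀ {κ : Type} [Fintype κ] (s : κ → A) (f : κ → A),
      ∑ j, s j * f j ∈ Ideal.span (Set.range f) := fun s f =>
    sum_mem fun j _ => Ideal.mul_mem_left _ _ (Ideal.subset_span ⟨j, rfl⟩)
  have hba : Ideal.span (Set.range b) ≤ Ideal.span (Set.range a) := by
    rw [Ideal.span_le]
    rintro _ ⟨j | j, rfl⟩ <;>
    exact sum_mem fun i _ => Ideal.mul_mem_left _ _ (Ideal.subset_span ⟨i, rfl⟩)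
  have hab : Ideal.span (Set.range a) ≤
      Ideal.span (Set.range b) ⊔ maximalIdeal A * Ideal.span (Set.range a) := by
    rw [Ideal.span_le]
    rintro _ ⟨i₀, rfl⟩
    have htop : (Pi.single i₀ 1 : ι → ResidueField A) ∈ V ⊔ W := by
      rw [hW.sup_eq_top]; trivial
    obtain ⟨v, hv, w, hw, hvw⟩ := Submodule.mem_sup.1 htop
    obtain ⟨s, hs⟩ := hbV v hv
    obtain ⟨t, ht⟩ := hbW w hw
    have h1 := sum_mul_mem_maximalIdeal_mul (a := a)
      (u := fun i => (Pi.single i₀ 1 : ι → A) i - (∑ j, s j * uV j i + ∑ j, t j * uW j i))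
      (fun i => by
        have := congrFun hvw i
        rw [map_sub, map_add, hs, ht, ← Pi.add_apply, hvw]
        rcases eq_or_ne i i₀ with rfl | hi
        · simp
        · simp [Pi.single_eq_of_ne hi])
    simp only [sub_mul, add_mul, Finset.sum_sub_distrib, Finset.sum_add_distrib, hsum] at h1
    have h2 : ∑ i, (Pi.single i₀ 1 : ι → A) i * a i = a i₀ := by
      rw [Finset.sum_eq_single i₀ (fun i _ hi => by rw [Pi.single_eq_of_ne hi, zero_mul])
        (fun h => (h (Finset.mem_univ _)).elim), Pi.single_eq_same, one_mul]
    rw [h2] at h1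
    have h3 : ∑ j, s j * b (Sum.inl j) + ∑ j, t j * b (Sum.inr j) ∈
        Ideal.span (Set.range b) :=
      add_mem (sum_mem fun j _ => Ideal.mul_mem_left _ _ (Ideal.subset_span ⟨_, rfl⟩))
        (sum_mem fun j _ => Ideal.mul_mem_left _ _ (Ideal.subset_span ⟨_, rfl⟩))
    have h4 := add_mem (Ideal.mem_sup_left h3 : _ ∈ Ideal.span (Set.range b) ⊔
      maximalIdeal A * Ideal.span (Set.range a)) (Ideal.mem_sup_right h1)
    convert h4 using 1
    simp [b]
  refine ⟨_, _, b, ?_, le_antisymm hba ?_, le_antisymm (fun x hx => ?_) (sup_le ?_ hmL)⟩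
  · rw [Submodule.finrank_add_eq_of_isCompl hW, Module.finrank_fintype_fun_eq_card]
  · refine Submodule.le_of_le_smul_of_le_jacobson_bot ?_
      (IsLocalRing.maximalIdeal_le_jacobson ⊥) hab
    exact Submodule.fg_span (Set.finite_range a)
  · obtain ⟨u, rfl⟩ := (Ideal.mem_span_range_iff_exists_fun).1 (hL hx)
    obtain ⟨s, hs⟩ := hbV (fun i => residue A (u i)) ⟨u, fun _ => rfl, hx⟩
    have h1 := sum_mul_mem_maximalIdeal_mul (a := a) (u := fun i => u i - ∑ j, s j * uV j i)
      (fun i => by rw [map_sub, hs, sub_self])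
    simp only [sub_mul, Finset.sum_sub_distrib, hsum] at h1
    have h2 := add_mem (Ideal.mem_sup_left (hmem s (b ∘ Sum.inl)) :
      _ ∈ Ideal.span (Set.range (b ∘ Sum.inl)) ⊔ maximalIdeal A * Ideal.span (Set.range a))
      (Ideal.mem_sup_right h1)
    convert h2 using 1
    simp [b]
  · rw [Ideal.span_le]
    rintro _ ⟨j, rfl⟩
    exact huVL j

end AdaptedGenerators

section Colengths

open MvPolynomial

variable {A : Type*} [CommRing A]

lemma sup_pow_succ_le {P R : Ideal A} (k : ℕ) :
    (P ⊔ R) ^ (k + 1) ≤ P * (P ⊔ R) ^ k ⊔ R ^ (k + 1) := by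
  induction k with
  | zero => simp
  | succ k ih =>
    have h1 : P * (P ⊔ R) ^ k * (P ⊔ R) = P * (P ⊔ R) ^ (k + 1) := by rw [pow_succ, mul_assoc]
    have h2 : R ^ (k + 1) * P ≤ P * (P ⊔ R) ^ (k + 1) := by
      rw [mul_comm]
      exact Ideal.mul_mono_right (Ideal.pow_right_mono le_sup_right _)
    calc (P ⊔ R) ^ (k + 1 + 1) = (P ⊔ R) ^ (k + 1) * (P ⊔ R) := pow_succ _ _
      _ ≤ (P * (P ⊔ R) ^ k ⊔ R ^ (k + 1)) * (P ⊔ R) := Ideal.mul_mono_left ih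
      _ = P * (P ⊔ R) ^ (k + 1) ⊔ (R ^ (k + 1) * P ⊔ R ^ (k + 1) * R) := by
        rw [Ideal.sup_mul, h1, Ideal.mul_sup (I := R ^ (k + 1))]
      _ ≤ _ := sup_le le_sup_left (sup_le (h2.trans le_sup_left) le_sup_right)

lemma mem_map_C_of_rename_sub_mem {p q : Type*} [Fintype p] {J : Ideal A} {G : MvPolynomial q A}
    {T : p → MvPolynomial (p ⊕ q) A}
    (h : rename Sum.inr G - ∑ j, X (Sum.inl j) * T j ∈ J.map C) : G ∈ J.map C := by
  let φ : MvPolynomial (p ⊕ q) A →+* MvPolynomial q A := eval₂Hom C (Sum.elim 0 X)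
  have h1 := Ideal.mem_map_of_mem φ h
  have h2 : φ.comp C = C := by
    ext; simp [φ]
  have h3 : φ (rename Sum.inr G - ∑ j, X (Sum.inl j) * T j) = G := by
    have : (Sum.elim 0 X : p ⊕ q → MvPolynomial q A) ∘ Sum.inr = X := rfl
    simp [φ, bind₁_rename, this, bind₁_X_left]
  rwa [h3, Ideal.map_map, h2] at h1

lemma exists_eval_eq_of_mem_span_mul {ι κ : Type*} [Fintype κ] {b : ι → A} {f : κ → ι} {k : ℕ}
    {t : A} (ht : t ∈ Ideal.span (Set.range (b ∘ f)) * Ideal.span (Set.range b) ^ k) :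
    ∃ T : κ → MvPolynomial ι A, (∀ j, (T j).IsHomogeneous k) ∧
      eval b (∑ j, X (f j) * T j) = t := by
  refine Submodule.mul_induction_on ht (fun x hx y hy => ?_) ?_
  · obtain ⟨c, rfl⟩ := (Ideal.mem_span_range_iff_exists_fun).1 hx
    obtain ⟨F, hF, rfl⟩ := exists_eval_eq_of_mem_span_range_pow hy
    refine ⟨fun j => C (c j) * F, fun j => hF.C_mul _, ?_⟩
    rw [map_sum, Finset.sum_mul]
    refine Finset.sum_congr rfl fun j _ => ?_
    simp
    ring
  · rintro x y ⟨S, hS, rfl⟩ ⟨T, hT, rfl⟩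
    refine ⟨S + T, fun j => (hS j).add (hT j), ?_⟩
    rw [← map_add, ← Finset.sum_add_distrib]
    simp only [Pi.add_apply, mul_add]

variable [IsLocalRing A] [IsNoetherianRing A]

lemma IsQuasiRegularParameters.of_hasRegularSeq {κ : Type*} [Fintype κ]
    (h : HasRegularSeq (⊥ : Ideal A) (Fintype.card κ)) {b : κ → A}
    (hb : ∀ i, b i ∈ maximalIdeal A) (hs : ∃ s, maximalIdeal A ^ s ≤ Ideal.span (Set.range b)) :
    IsQuasiRegularParameters b := by
  refine ⟨?_, hs⟩
  set σ := (Fintype.equivFin κ).symm with hσ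
  have hrange : Set.range (b ∘ σ) = Set.range b := σ.surjective.range_comp b
  have hreg := quasiRegularOn_univ_of_regularMod (a := b ∘ σ) fun i => by
    have := h.regularMod_of_generators (a := b ∘ σ) (fun i => hb _)
      (by rw [hrange, bot_sup_eq]; exact hs) i
    rwa [bot_sup_eq] at this
  intro n F hF _ hFn m
  have hF' : (rename σ.symm F).IsHomogeneous n := hF.rename_isHomogeneous
  have := hreg n (rename σ.symm F) hF' (supportedOn_univ _) (by
    rw [eval_rename, Function.comp_assoc, Equiv.self_comp_symm, Function.comp_id]
    exact hFn) (Finsupp.mapDomain σ.symm m)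
  rw [coeff_rename_mapDomain _ σ.symm.injective] at this
  rw [Set.image_univ] at this ⊢
  rwa [hrange] at this

namespace IsQuasiRegularParameters

variable {ι : Type*} [Fintype ι] {a : ι → A}

lemma length_quotient_mul_pow_of_le_sup (ha : IsQuasiRegularParameters a) {I : Ideal A}
    (hI : Ideal.span (Set.range a) ≤ I) {w : A} (hwI : w ∈ I ^ 2)
    (hw : w ∉ I * Ideal.span (Set.range a))
    (hmw : ∀ r ∈ maximalIdeal A, r * w ∈ I * Ideal.span (Set.range a)) {i : ℕ}
    (h : I ^ (i + 2) ≤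
      I * Ideal.span (Set.range a) ^ (1 + i) ⊔ Ideal.span {w} * Ideal.span (Set.range a) ^ i) :
    Module.length A (A ⧸ I * Ideal.span (Set.range a) ^ (1 + i)) =
      Module.length A (A ⧸ I ^ (i + 2)) + (Fintype.card ι).multichoose i := by
  rw [← pow_one (Ideal.span (Set.range a))] at hw hmw
  have h1 := length_eq_add_multichoose a i w (M₀ := I * Ideal.span (Set.range a) ^ (1 + i))
    (M₁ := I ^ (i + 2)) (J := maximalIdeal A) (le_antisymm h (sup_le ?_ ?_))
    fun F hF => ha.eval_mul_mem_iff hI hw hmw hF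
  · rwa [length_quotient_maximalIdeal, mul_one] at h1
  · rw [show i + 2 = 1 + i + 1 by ring]
    exact mul_pow_le_pow_succ hI _
  · rw [add_comm i 2, pow_add I]
    exact Ideal.mul_mono ((Ideal.span_singleton_le_iff_mem _).2 hwI) (Ideal.pow_right_mono hI _)

end IsQuasiRegularParameters

/-- If `I ^ (k + 2)` is generated modulo `I (b) ^ (k + 1)` by the multiples of `z` by those forms of
degree `k + 1` in `b` that involve a variable indexed by `p`, its colength is that of
`I (b) ^ (k + 1)` less the number of these forms. -/
lemma IsQuasiRegularParameters.length_quotient_mul_pow_of_sum {p q : Type*} [Fintype p] [Fintype q]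
    {b : p ⊕ q → A} (hb : IsQuasiRegularParameters b) {I : Ideal A}
    (hI : Ideal.span (Set.range b) ≤ I) {z : A} (hz : z ∉ I)
    (hmz : ∀ r ∈ maximalIdeal A, r * z ∈ I) {k : ℕ}
    (h : I ^ (k + 2) = I * Ideal.span (Set.range b) ^ (k + 1) ⊔
      Ideal.span {z} * (Ideal.span (Set.range (b ∘ Sum.inl)) * Ideal.span (Set.range b) ^ k)) :
    Module.length A (A ⧸ I * Ideal.span (Set.range b) ^ (k + 1)) +
        (Fintype.card q).multichoose (k + 1) =
      Module.length A (A ⧸ I ^ (k + 2)) +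
        (Fintype.card p + Fintype.card q).multichoose (k + 1) := by
  set P := Ideal.span (Set.range (b ∘ Sum.inl)) with hP
  set R := Ideal.span (Set.range (b ∘ Sum.inr)) with hR
  have hQ : Ideal.span (Set.range b) = P ⊔ R := by
    rw [hP, hR, ← Ideal.span_union]
    congr 1
    ext x
    simp [Set.mem_range, Sum.exists]
  have hRQ : R ≤ Ideal.span (Set.range b) := hQ ▸ le_sup_right
  have hPQ : P ≤ Ideal.span (Set.range b) := hQ ▸ le_sup_left
  have hpow : I * Ideal.span (Set.range b) ^ 0 = I := by rw [pow_zero, mul_one]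
  have hiff : ∀ F : MvPolynomial (p ⊕ q) A, F.IsHomogeneous (k + 1) →
      (eval b F * z ∈ I * Ideal.span (Set.range b) ^ (k + 1) ↔
        F ∈ (maximalIdeal A).map C) := by
    intro F hF
    have := hb.eval_mul_mem_iff hI (m := 0) (w := z) (by rwa [hpow]) (by rwa [hpow]) hF
    rwa [zero_add] at this
  set M : Ideal A := I * Ideal.span (Set.range b) ^ (k + 1) ⊔
    Ideal.span {z} * Ideal.span (Set.range b) ^ (k + 1) with hM
  have h₁ : Module.length A (A ⧸ I * Ideal.span (Set.range b) ^ (k + 1)) =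
      Module.length A (A ⧸ M) + (Fintype.card (p ⊕ q)).multichoose (k + 1) *
        Module.length A (A ⧸ maximalIdeal A) :=
    length_eq_add_multichoose b (k + 1) z hM hiff
  have hMR : M = I ^ (k + 2) ⊔ Ideal.span {z} * R ^ (k + 1) := by
    apply le_antisymm
    · rw [hM, h]
      refine sup_le (le_sup_left.trans le_sup_left) ?_
      have h3 : Ideal.span (Set.range b) ^ (k + 1) ≤
          P * Ideal.span (Set.range b) ^ k ⊔ R ^ (k + 1) := by
        rw [hQ]; exact sup_pow_succ_le k
      refine (Ideal.mul_mono_right h3).trans ?_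
      rw [Ideal.mul_sup (I := Ideal.span {z})]
      exact sup_le_sup_right le_sup_right _
    · rw [hM, h]
      refine sup_le (sup_le_sup_left (Ideal.mul_mono_right ?_) _)
        ((Ideal.mul_mono_right (Ideal.pow_right_mono hRQ _)).trans le_sup_right)
      rw [pow_succ']
      exact Ideal.mul_mono_left hPQ
  have h₂ : Module.length A (A ⧸ I ^ (k + 2)) =
      Module.length A (A ⧸ M) + (Fintype.card q).multichoose (k + 1) *
        Module.length A (A ⧸ maximalIdeal A) := by
    refine length_eq_add_multichoose (b ∘ Sum.inr) (k + 1) z hMR fun G hG => ⟨fun hGz => ?_,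
      fun hGm => ?_⟩
    · rw [h] at hGz
      obtain ⟨u, hu, v, hv, huv⟩ := Submodule.mem_sup.1 hGz
      obtain ⟨t, ht, rfl⟩ := Ideal.mem_span_singleton_mul.1 hv
      obtain ⟨T, hT, rfl⟩ := exists_eval_eq_of_mem_span_mul ht
      refine mem_map_C_of_rename_sub_mem (T := T) ((hiff _ ?_).1 ?_)
      · refine hG.rename_isHomogeneous.sub (IsHomogeneous.sum _ _ _ fun j _ => ?_)
        rw [add_comm k]
        exact (isHomogeneous_X _ _).mul (hT j)
      · rw [map_sub, eval_rename, sub_mul, ← huv, mul_comm z, add_sub_cancel_right]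
        exact hu
    · have h3 : eval (b ∘ Sum.inr) G * z ∈ I * R ^ (k + 1) :=
        eval_mul_mem_of_mem_map_C hG hGm hmz
      have h4 : I * R ^ (k + 1) ≤ I ^ (k + 1 + 1) := mul_pow_le_pow_succ (hRQ.trans hI) _
      exact h4 h3
  rw [h₁, h₂, length_quotient_maximalIdeal, Fintype.card_sum]
  ring

end Colengths

section SallyModule

open MvPolynomial

variable {A : Type*} [CommRing A]

lemma pow_add_two_eq {I Q : Ideal A} (hQI : Q ≤ I) (h : I ^ 3 ≤ I ^ 2 * Q) (k : ℕ) :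
    I ^ (k + 2) = I ^ 2 * Q ^ k := by
  induction k with
  | zero => simp
  | succ k ih =>
    apply le_antisymm
    · calc I ^ (k + 1 + 2) = I ^ (k + 2) * I := pow_succ _ _
        _ = I ^ 3 * Q ^ k := by rw [ih]; ring
        _ ≤ I ^ 2 * Q * Q ^ k := Ideal.mul_mono_left h
        _ = _ := by ring
    · calc I ^ 2 * Q ^ (k + 1) ≤ I ^ 2 * I ^ (k + 1) :=
            Ideal.mul_mono_right (Ideal.pow_right_mono hQI _)
        _ = _ := by ring

/-- The elements of `Q` that multiply `z` into `K`. -/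
def colonInf (Q K : Ideal A) (z : A) : Ideal A :=
  Q ⊓ Submodule.comap (LinearMap.mulRight A z) K

lemma mem_colonInf {Q K : Ideal A} {z x : A} : x ∈ colonInf Q K z ↔ x ∈ Q ∧ x * z ∈ K :=
  Iff.rfl

/-- If `I² ⊆ IQ + zQ` and `zI ⊆ IQ + zQ`, then `I²` and all higher powers of `I` are determined by
the ideal of elements of `Q` multiplying `z` into `I²`. -/
lemma pow_add_two_eq_sup {I Q : Ideal A} (hQI : Q ≤ I) {z : A}
    (hI : I ^ 2 ≤ I * Q ⊔ Ideal.span {z} * Q) (hz : ∀ x ∈ I, z * x ∈ I * Q ⊔ Ideal.span {z} * Q)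
    (k : ℕ) :
    I ^ (k + 2) = I * Q ^ (k + 1) ⊔ Ideal.span {z} * (colonInf Q (I ^ 2) z * Q ^ k) := by
  set L := colonInf Q (I ^ 2) z with hL
  have hLQ : L ≤ Q := inf_le_left
  have hIQ : I * Q ≤ I ^ 2 := by rw [sq]; exact Ideal.mul_mono_right hQI
  have hzL : Ideal.span {z} * L ≤ I ^ 2 := by
    rw [Ideal.span_singleton_mul_le_iff]
    intro l hl
    rw [mul_comm]
    exact (mem_colonInf.1 hl).2
  have h2 : I ^ 2 = I * Q ⊔ Ideal.span {z} * L := by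
    refine le_antisymm (fun x hx => ?_) (sup_le hIQ hzL)
    obtain ⟨u, hu, v, hv, rfl⟩ := Submodule.mem_sup.1 (hI hx)
    obtain ⟨l, hl, rfl⟩ := Ideal.mem_span_singleton_mul.1 hv
    refine Submodule.add_mem_sup hu (Ideal.mul_mem_mul (Ideal.mem_span_singleton_self z)
      (mem_colonInf.2 ⟨hl, ?_⟩))
    have := sub_mem hx (hIQ hu)
    rwa [add_sub_cancel_left, mul_comm] at this
  have hzI : Ideal.span {z} * I ≤ I * Q ⊔ Ideal.span {z} * Q := by
    rw [Ideal.span_singleton_mul_le_iff]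
    exact hz
  have h3 : I ^ 3 ≤ I ^ 2 * Q := by
    calc I ^ 3 = I ^ 2 * I := pow_succ _ _
      _ = I * Q * I ⊔ Ideal.span {z} * L * I := by rw [h2, Ideal.sup_mul]
      _ ≤ I ^ 2 * Q := by
        refine sup_le (le_of_eq (by ring)) ?_
        calc Ideal.span {z} * L * I = (Ideal.span {z} * I) * L := by ring
          _ ≤ (I * Q ⊔ Ideal.span {z} * Q) * L := Ideal.mul_mono_left hzI
          _ = I * Q * L ⊔ Ideal.span {z} * Q * L := Ideal.sup_mul _ _ _
          _ ≤ I ^ 2 * Q := by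
            refine sup_le (Ideal.mul_mono hIQ hLQ) ?_
            calc Ideal.span {z} * Q * L = (Ideal.span {z} * L) * Q := by ring
              _ ≤ I ^ 2 * Q := Ideal.mul_mono_left hzL
  rw [pow_add_two_eq hQI h3, h2, Ideal.sup_mul]
  congr 1 <;> ring

variable [IsLocalRing A] [IsNoetherianRing A] {ι : Type*} {a : ι → A}

namespace IsQuasiRegularParameters

lemma exists_forall_mem_sup (ha : IsQuasiRegularParameters a) {I : Ideal A}
    (hI : Ideal.span (Set.range a) ≤ I) {w : A} (hwI : w ∈ I ^ 2)
    (hw : w ∉ I * Ideal.span (Set.range a))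
    (hmw : ∀ r ∈ maximalIdeal A, r * w ∈ I * Ideal.span (Set.range a))
    (hrank : ∀ i, ∀ y ∈ I ^ (i + 2), ∃ (k : ℕ) (f g : MvPolynomial ι A), f.IsHomogeneous k ∧
      g.IsHomogeneous (k + i) ∧ map (residue A) f ≠ 0 ∧
      eval a f * y - eval a g * w ∈ I * Ideal.span (Set.range a) ^ (1 + k + i))
    (hnot : ¬ ∀ i, I ^ (i + 2) ≤
      I * Ideal.span (Set.range a) ^ (1 + i) ⊔ Ideal.span {w} * Ideal.span (Set.range a) ^ i) :
    ∃ z ∉ I, (∀ r ∈ maximalIdeal A, r * z ∈ I) ∧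
      I ^ 2 ≤ I * Ideal.span (Set.range a) ⊔ Ideal.span {z} * Ideal.span (Set.range a) ∧
      ∀ x ∈ I,
        z * x ∈ I * Ideal.span (Set.range a) ⊔ Ideal.span {z} * Ideal.span (Set.range a) := by
  set Q := Ideal.span (Set.range a) with hQ
  have hw1 : w ∉ I * Q ^ 1 := by rwa [pow_one]
  have hmw1 : ∀ r ∈ maximalIdeal A, r * w ∈ I * Q ^ 1 := by rwa [pow_one]
  push Not at hnot
  obtain ⟨i, hi⟩ := hnot
  obtain ⟨y, hy, hy'⟩ := SetLike.not_le_iff_exists.1 hi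
  obtain ⟨k, f, g, hf, hg, hf0, hfg⟩ := hrank i y hy
  obtain ⟨k', F, G, z, hk', hF, hG, hF0, hyz, hwz⟩ := ha.exists_lowest_terms hI hmw1 hw1
    (ha.mul_mem_of_eval_mul_sub_mem hI hmw1 hf hg hf0 hfg) hf hg hf0 hfg
  obtain rfl : k' = 1 := by
    by_contra hk1
    obtain rfl : k' = 0 := by omega
    rw [zero_add] at hG
    exact hy' (mem_sup_of_isUnit (isUnit_eval_of_isHomogeneous_zero hF hF0)
      (eval_mem_span_range_pow hG) hyz hwz)
  have hpow : I * Q ^ 0 = I := by rw [pow_zero, mul_one]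
  have hFQ : eval a F ∈ Q := by simpa using eval_mem_span_range_pow (a := a) hF
  have hz : z ∉ I := by
    intro hz
    apply hw
    have h1 : eval a F * z ∈ I * Q := by
      rw [mul_comm (eval a F)]
      exact Ideal.mul_mem_mul hz hFQ
    rw [pow_one] at hwz
    simpa using add_mem hwz h1
  have hmz : ∀ r ∈ maximalIdeal A, r * z ∈ I := by
    intro r hr
    rw [← hpow]
    refine ha.mem_of_eval_mul_mem hI hF hF0 ?_
    have h1 := sub_mem (hmw1 r hr) (Ideal.mul_mem_left _ r hwz)
    rw [zero_add]
    convert h1 using 1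
    ring
  have hmem : ∀ j, ∀ y' ∈ I ^ (j + 2),
      y' ∈ I * Q ^ (j + 1) ⊔ Ideal.span {z} * Q ^ (j + 1) := by
    intro j y' hy'
    obtain ⟨k, f, g, hf, hg, hf0, hfg⟩ := hrank j y' hy'
    have hgF : (g * F).IsHomogeneous (k + (j + 1)) := by
      rw [← add_assoc]
      exact hg.mul hF
    refine ha.mem_sup_of_eval_mul_sub_mem hI hmz hz hf hgF hf0 ?_
    have h1 : (w - eval a F * z) * eval a g ∈ I * Q ^ (1 + k + j) := by
      rw [add_assoc, pow_add, ← mul_assoc]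
      exact Ideal.mul_mem_mul hwz (eval_mem_span_range_pow hg)
    have h2 := add_mem hfg h1
    rw [show k + (j + 1) = 1 + k + j by ring, map_mul]
    convert h2 using 1
    ring
  have hI2 : I ^ 2 ≤ I * Q ⊔ Ideal.span {z} * Q := fun y hy => by
    simpa using hmem 0 y hy
  refine ⟨z, hz, hmz, hI2, fun x hx => ?_⟩
  have h1 : x * w ∈ I * Q ^ 2 ⊔ Ideal.span {z} * Q ^ 2 :=
    hmem 1 _ (by rw [pow_succ', add_comm 1 1]; exact Ideal.mul_mem_mul hx hwI)
  have h2 : x * (w - eval a F * z) ∈ I * Q ^ 2 ⊔ Ideal.span {z} * Q ^ 2 := by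
    have h3 : x * (w - eval a F * z) ∈ I * (I * Q) := by
      rw [pow_one] at hwz
      exact Ideal.mul_mem_mul hx hwz
    have h4 : I * (I * Q) ≤ I * Q ^ 2 ⊔ Ideal.span {z} * Q ^ 2 := by
      calc I * (I * Q) = I ^ 2 * Q := by ring
        _ ≤ (I * Q ⊔ Ideal.span {z} * Q) * Q := Ideal.mul_mono_left hI2
        _ = I * Q * Q ⊔ Ideal.span {z} * Q * Q := Ideal.sup_mul _ _ _
        _ = _ := by congr 1 <;> ring
    exact h4 h3
  obtain ⟨u, hu, v, hv, huv⟩ := Submodule.mem_sup.1 (sub_mem h1 h2)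
  obtain ⟨t, ht, rfl⟩ := Ideal.mem_span_singleton_mul.1 hv
  obtain ⟨K, hK, rfl⟩ := exists_eval_eq_of_mem_span_range_pow ht
  have h3 : eval a F * (z * x) - eval a K * z ∈ I * Q ^ (1 + 1) := by
    convert hu using 1
    linear_combination -huv
  simpa using ha.mem_sup_of_eval_mul_sub_mem hI hmz hz hF hK hF0 h3

lemma exists_length_quotient_mul_pow [Fintype ι] [Nonempty ι] (ha : IsQuasiRegularParameters a)
    (hseq : HasRegularSeq (⊥ : Ideal A) (Fintype.card ι)) {I : Ideal A}
    (hI : Ideal.span (Set.range a) ≤ I) (hIm : I ≤ maximalIdeal A)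
    (hne : ∃ n, I ^ (n + 1) ≠ I * Ideal.span (Set.range a) ^ n)
    (hlen : ∀ i, ∃ k, ¬ Module.length A (A ⧸ I ^ (k + i + 2)) +
      ((Fintype.card ι).multichoose (k + i) : ℕ∞) + ((Fintype.card ι).multichoose k : ℕ∞) ≤
        Module.length A (A ⧸ I * Ideal.span (Set.range a) ^ (k + i + 1))) :
    ∃ c, 0 < c ∧ c ≤ Fintype.card ι ∧ ∀ n,
      Module.length A (A ⧸ I * Ideal.span (Set.range a) ^ n) +
        (Fintype.card ι - c).multichoose n =
      Module.length A (A ⧸ I ^ (n + 1)) + (Fintype.card ι).multichoose n := by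
  set Q := Ideal.span (Set.range a) with hQ
  have hQI2 : I * Q ≤ I ^ 2 := by rw [sq]; exact Ideal.mul_mono_right hI
  have hI2 : ¬ I ^ 2 ≤ I * Q := by
    intro h
    obtain ⟨n, hn⟩ := hne
    exact hn (pow_succ_eq_mul_pow (le_antisymm h hQI2) n)
  have hs : ∃ s, maximalIdeal A ^ s ≤ I * Q := by
    obtain ⟨s, hs⟩ := ha.exists_pow_le
    refine ⟨s + s, ?_⟩
    rw [pow_add]
    exact Ideal.mul_mono (hs.trans hI) hs
  obtain ⟨w, hwI, hw, hmw⟩ := exists_socle_mod hI2 hs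
  have hrank := fun i y (hy : y ∈ I ^ (i + 2)) =>
    ha.exists_eval_mul_sub_mem hI hwI hw hy (hlen i)
  by_cases hcase : ∀ i, I ^ (i + 2) ≤ I * Q ^ (1 + i) ⊔ Ideal.span {w} * Q ^ i
  · have hpos : 0 < Fintype.card ι := Fintype.card_pos
    refine ⟨1, one_pos, hpos, fun n => ?_⟩
    obtain ⟨d, hd⟩ := Nat.exists_eq_add_of_le' hpos
    rcases n with _ | n
    · rw [pow_zero, mul_one, zero_add, pow_one, Nat.multichoose_zero_right,
        Nat.multichoose_zero_right]
    · have h1 := ha.length_quotient_mul_pow_of_le_sup hI hwI hw hmw (hcase n)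
      rw [add_comm 1 n] at h1
      rw [h1, hd, Nat.multichoose_succ_succ, Nat.add_sub_cancel, Nat.cast_add]
      ring
  · obtain ⟨z, hz, hmz, hzI2, hzI⟩ := ha.exists_forall_mem_sup hI hwI hw hmw hrank hcase
    have hpow := pow_add_two_eq_sup hI hzI2 hzI
    have hmL : maximalIdeal A * Q ≤ colonInf Q (I ^ 2) z := by
      rw [Ideal.mul_le]
      intro r hr q hq
      refine mem_colonInf.2 ⟨Ideal.mul_mem_left _ _ hq, hQI2 ?_⟩
      rw [mul_right_comm]
      exact Ideal.mul_mem_mul (hmz r hr) hq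
    obtain ⟨p, q, b, hpq, hbQ, hL⟩ := exists_adapted_generators a hmL inf_le_left
    rw [← hQ] at hbQ hL
    have hzm : Ideal.span {z} * (maximalIdeal A * Q) ≤ I * Q := by
      rw [← mul_assoc, mul_comm (Ideal.span {z})]
      refine Ideal.mul_mono_left ?_
      rw [mul_comm, Ideal.span_singleton_mul_le_iff]
      intro r hr
      rw [mul_comm]
      exact hmz r hr
    have hpow' : ∀ k, I ^ (k + 2) = I * Q ^ (k + 1) ⊔
        Ideal.span {z} * (Ideal.span (Set.range (b ∘ Sum.inl)) * Q ^ k) := by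
      intro k
      rw [hpow k, hL, Ideal.sup_mul, Ideal.mul_sup (I := Ideal.span {z}), sup_comm (_ * _ : Ideal A)
        (Ideal.span {z} * (maximalIdeal A * Q * Q ^ k)), ← sup_assoc]
      congr 1
      refine sup_eq_left.2 ?_
      calc Ideal.span {z} * (maximalIdeal A * Q * Q ^ k)
          = Ideal.span {z} * (maximalIdeal A * Q) * Q ^ k := by ring
        _ ≤ I * Q * Q ^ k := Ideal.mul_mono_left hzm
        _ = _ := by ring
    have hp : 0 < p := by
      by_contra! hp0
      obtain rfl : p = 0 := by omega
      apply hI2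
      have := hpow' 0
      rw [Set.range_eq_empty, Ideal.span_empty, Ideal.bot_mul, Ideal.mul_bot, sup_bot_eq,
        zero_add, zero_add, pow_one] at this
      exact this.le
    have hcard : Fintype.card (Fin p ⊕ Fin q) = Fintype.card ι := by
      rw [Fintype.card_sum, Fintype.card_fin, Fintype.card_fin, hpq]
    have hb : IsQuasiRegularParameters b :=
      .of_hasRegularSeq (hcard ▸ hseq)
        (fun i => hIm (hI (hbQ ▸ Ideal.subset_span ⟨i, rfl⟩))) (hbQ ▸ ha.exists_pow_le)
    refine ⟨p, hp, by omega, fun n => ?_⟩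
    rcases n with _ | n
    · rw [pow_zero, mul_one, zero_add, pow_one, Nat.multichoose_zero_right,
        Nat.multichoose_zero_right]
    · have := hb.length_quotient_mul_pow_of_sum (hbQ ▸ hI) hz hmz (k := n)
        (by rw [hbQ]; exact hpow' n)
      rw [hbQ, Fintype.card_fin, Fintype.card_fin, hpq] at this
      rw [show Fintype.card ι - p = q by omega]
      exact this

end IsQuasiRegularParameters

end SallyModule

section HilbertFunction

lemma krullDim_submodule_eq_iff {R M : Type*} [Ring R] [AddCommGroup M] [Module R M] {n : ℕ} :
    Order.krullDim (Submodule R M) = ((n : ℕ∞) : WithBot ℕ∞) ↔ Module.length R M = n := by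
  rw [← Module.coe_length, WithBot.coe_inj]

lemma exists_pow_maximalIdeal_le {A : Type*} [CommRing A] [IsLocalRing A] [IsNoetherianRing A]
    {I Q : Ideal A} (hI : maximalIdeal A ≤ I.radical) {r : ℕ} (hr : I ^ r ≤ Q) :
    ∃ s, maximalIdeal A ^ s ≤ Q := by
  obtain ⟨t, ht⟩ := Ideal.exists_pow_le_of_le_radical_of_fg hI
    (IsNoetherian.noetherian (maximalIdeal A))
  refine ⟨t * r, ?_⟩
  rw [pow_mul]
  exact (Ideal.pow_right_mono ht r).trans hr

lemma pow_add_eq_mul_pow {A : Type*} [CommRing A] {I Q : Ideal A} {r : ℕ}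
    (hr : I ^ (r + 1) = Q * I ^ r) (n : ℕ) : I ^ (n + r) = Q ^ n * I ^ r := by
  induction n with
  | zero => simp
  | succ n ih =>
    rw [show n + 1 + r = (r + 1) + n by ring, pow_add, hr, pow_succ, mul_assoc, ← pow_add,
      add_comm r n, ih]
    ring

lemma length_quotient_anti {A : Type*} [CommRing A] {I J : Ideal A} (h : I ≤ J) :
    Module.length A (A ⧸ J) ≤ Module.length A (A ⧸ I) :=
  Module.length_le_of_surjective _ (Submodule.factor_surjective h)

lemma length_quotient_eq_length_subquotient_add {A : Type*} [CommRing A] {I J : Ideal A}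
    (h : I ≤ J) :
    Module.length A (A ⧸ I) =
      Module.length A (↥J ⧸ Submodule.comap J.subtype I) + Module.length A (A ⧸ J) := by
  refine Module.length_eq_add_of_exact
    (Submodule.mapQ (Submodule.comap J.subtype I) I J.subtype le_rfl)
    (Submodule.factor h) ?_ (Submodule.factor_surjective h) ?_
  · rw [← LinearMap.ker_eq_bot, Submodule.ker_mapQ, Submodule.mkQ_map_self]
  · rw [LinearMap.exact_iff, Submodule.range_mapQ, Submodule.range_subtype]
    ext x
    obtain ⟨x, rfl⟩ := Submodule.mkQ_surjective _ x
    rw [LinearMap.mem_ker, Submodule.factor_mk, Submodule.mkQ_apply,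
      Submodule.Quotient.mk_eq_zero]
    constructor
    · exact fun hx => ⟨x, hx, rfl⟩
    · rintro ⟨y, hy, hyx⟩
      replace hyx := (Submodule.Quotient.eq _).1 hyx
      simpa using sub_mem hy (h hyx)

lemma QuasiRegularOn.exists_length_quotient_mul_pow_eq {A ι : Type*} [CommRing A] [Fintype ι]
    {a : ι → A} (hq : QuasiRegularOn a Set.univ) {I : Ideal A} (hI : Ideal.span (Set.range a) ≤ I)
    {q h : ℕ} (hQ : Module.length A (A ⧸ Ideal.span (Set.range a)) = q)
    (hh : Module.length A (A ⧸ I) = h) (n : ℕ) :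
    ∃ K : ℕ, Module.length A (A ⧸ I * Ideal.span (Set.range a) ^ n) = K ∧
      K + (Fintype.card ι).multichoose n * q =
        (Fintype.card ι + 1).multichoose n * q + (Fintype.card ι).multichoose n * h := by
  have h1 := hq.length_quotient_mul_pow hI n
  have h2 := hq.length_quotient_mul_pow le_rfl n
  rw [← pow_succ', hq.length_quotient_pow_succ, hQ] at h2
  have hfin : Module.length A (A ⧸ Ideal.span (Set.range a) ^ n) ≠ ⊤ := by
    intro htop
    rw [htop, top_add] at h2
    exact ENat.natCast_ne_top _ ((Nat.cast_mul _ _).trans h2)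
  obtain ⟨L, hL⟩ := ENat.ne_top_iff_exists.1 hfin
  rw [← hL] at h1 h2
  refine ⟨L + (Fintype.card ι).multichoose n * h, by rw [h1, hh]; push_cast; rfl, ?_⟩
  have h3 : (Fintype.card ι + 1).multichoose n * q = L + (Fintype.card ι).multichoose n * q := by
    exact_mod_cast h2
  rw [h3]
  ring

lemma IsQuasiRegularParameters.hilbertFunction_eq {A : Type*} [CommRing A] [IsLocalRing A]
    [IsNoetherianRing A] {p : ℕ} {a : Fin (p + 1) → A} (ha : IsQuasiRegularParameters a)
    (hseq : HasRegularSeq (⊥ : Ideal A) (p + 1)) {I : Ideal A}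
    (hI : Ideal.span (Set.range a) ≤ I) (hIm : I ≤ maximalIdeal A) {r : ℕ}
    (hred : I ^ (r + 1) = Ideal.span (Set.range a) * I ^ r) {H : ℕ → ℕ}
    (hH : ∀ n, Module.length A (A ⧸ I ^ (n + 1)) = H n) {e : ℕ → ℤ} {N : ℕ}
    (hHS : ∀ n ≥ N, (H n : ℤ) = ∑ i ∈ Finset.range (p + 1 + 1),
      ((-1) ^ i * e i) * ((p + 1 - i + 1).multichoose n : ℤ))
    (he : e 1 = e 0 - (H 0 : ℤ) + 1) {c : ℕ}
    (hc : Module.length A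
      (↥(I ^ 2) ⧸ Submodule.comap (I ^ 2).subtype (I * Ideal.span (Set.range a))) = c) :
    0 < c ∧ c ≤ p + 1 ∧ ∀ n, (H n : ℤ) = e 0 * (p + 1 + 1).multichoose n -
      e 1 * (p + 1).multichoose n + (p + 1 - c).multichoose n := by
  set Q := Ideal.span (Set.range a) with hQ
  have hh : Module.length A (A ⧸ I) = H 0 := by
    rw [← hH 0, zero_add, pow_one]
  have hpow : ∀ n, I ^ (n + r) ≤ Q ^ n := fun n =>
    (pow_add_eq_mul_pow hred n).trans_le Ideal.mul_le_left
  obtain ⟨q, hq⟩ : ∃ q : ℕ, Module.length A (A ⧸ Q) = q := by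
    have h1 := length_quotient_anti (hpow 1)
    rw [add_comm, hH, pow_one] at h1
    exact (ENat.ne_top_iff_exists.1 (h1.trans_lt (ENat.natCast_lt_top _)).ne).imp fun _ h => h.symm
  have hlenQ : ∀ n, Module.length A (A ⧸ Q ^ (n + 1)) =
      ((q * (p + 1 + 1).multichoose n : ℕ) : ℕ∞) := by
    intro n
    rw [ha.quasiRegularOn.length_quotient_pow_succ, hq, Fintype.card_fin, mul_comm, Nat.cast_mul]
  choose K hK hKq using ha.quasiRegularOn.exists_length_quotient_mul_pow_eq hI hq hh
  rw [Fintype.card_fin] at hKq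
  have h0 : e 0 = q := by
    have := leading_coeff_eq (r := r) (q := q) hHS (fun n => ?_) (fun n => ?_)
    · simpa using this
    · have := length_quotient_anti (Ideal.pow_right_mono hI (n + 1))
      rw [hH, hlenQ] at this
      exact_mod_cast this
    · have := length_quotient_anti (hpow (n + 1))
      rw [hlenQ, add_right_comm n 1 r, hH] at this
      exact_mod_cast this
  obtain ⟨B, hB⟩ := exists_abs_sub_le (q := q) (h := H 0) hHS (by simpa using h0) (by
    rw [pow_one, neg_one_mul, he, h0])
  have hS : ∀ n, (q * (p + 2).multichoose n - (q - (H 0 : ℕ)) * (p + 1).multichoose n - H n : ℤ) =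
      K n - H n := by
    intro n
    have := hKq n
    zify at this
    linear_combination -this
  have hcard : HasRegularSeq (⊥ : Ideal A) (Fintype.card (Fin (p + 1))) := by
    rwa [Fintype.card_fin]
  have hne : ∃ n, I ^ (n + 1) ≠ I * Q ^ n := by
    by_contra! hne
    refine not_abs_sub_multichoose_le hB fun n => ?_
    have h1 := hH n
    rw [hne n, hK n, Nat.cast_inj] at h1
    rw [hS n, h1, sub_self]
  have hlen : ∀ i, ∃ k, ¬ Module.length A (A ⧸ I ^ (k + i + 2)) +
      ((Fintype.card (Fin (p + 1))).multichoose (k + i) : ℕ∞) +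
      ((Fintype.card (Fin (p + 1))).multichoose k : ℕ∞) ≤
        Module.length A (A ⧸ I * Q ^ (k + i + 1)) := by
    by_contra! hlen
    obtain ⟨i, hi⟩ := hlen
    refine not_multichoose_add_multichoose_le hB (i := i) fun k => ?_
    have h1 := hi k
    rw [hK, hH (k + i + 1), Fintype.card_fin] at h1
    norm_cast at h1
    rw [hS]
    zify at h1
    linarith
  obtain ⟨c', hc0, hcp, hcn⟩ := ha.exists_length_quotient_mul_pow hcard hI hIm hne hlen
  simp only [Fintype.card_fin] at hcp hcn
  have hKH : ∀ n, K n + (p + 1 - c').multichoose n = H n + (p + 1).multichoose n := by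
    intro n
    have := hcn n
    rw [hK, hH] at this
    exact_mod_cast this
  have hcc : c = c' := by
    have h1 := length_quotient_eq_length_subquotient_add
      (show I * Q ≤ I ^ 2 by simpa using mul_pow_le_pow_succ hI 1)
    have h2 := hK 1
    rw [pow_one, h1, hc, hH 1] at h2
    have h3 := hKH 1
    rw [Nat.multichoose_one_right, Nat.multichoose_one_right] at h3
    norm_cast at h2
    omega
  subst hcc
  refine ⟨hc0, hcp, fun n => ?_⟩
  have h1 := hKH n
  have h2 := hS n
  zify at h1
  rw [he, h0]
  linear_combination -h1 - h2

end HilbertFunction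

/-- Main theorem, assertion (iii): if `e₁ = e₀ - ℓ_A(A/I) + 1` and
`c = ℓ_A(I²/QI)`, then `0 < c ≤ d`, and if `c < d` then
`ℓ_A(A/I^{n+1}) = e₀·C(n+d,d) - e₁·C(n+d-1,d-1) + C(n+d-c-1,d-c-1)` for all `n ≥ 0`;
consequently `e_{c+1} = (-1)^{c+1}` and `eᵢ = 0` for `2 ≤ i ≤ d`, `i ≠ c+1`.
Here `H n = ℓ_A(A/I^{n+1})` (so `H 0 = ℓ_A(A/I)`). -/
theorem main_theorem_iii (A : Type*) [CommRing A] [IsLocalRing A] [IsNoetherianRing A]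
    [Infinite (ResidueField A)]
    (d : ℕ) (hd : 0 < d) (hCM : IsCohenMacaulayLocal A d)
    (I Q : Ideal A) (hI : IsPrimaryToMax A I)
    (a : Fin d → A) (hQ : Q = Ideal.span (Set.range a)) (hQI : Q ≤ I)
    (hred : ∃ r : ℕ, I ^ (r + 1) = Q * I ^ r)
    (H : ℕ → ℕ)
    (hH : ∀ n : ℕ, moduleLength A (A ⧸ I ^ (n + 1)) = (H n : ℕ∞))
    (e : ℕ → ℤ) (N : ℕ)
    (hHS : ∀ n ≥ N, (H n : ℤ) =
      ∑ i ∈ Finset.range (d + 1),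
        (-1) ^ i * e i * ((n + d - i).choose (d - i) : ℤ))
    (he : e 1 = e 0 - (H 0 : ℤ) + 1)
    (c : ℕ)
    (hc : moduleLength A
      (↥(I ^ 2) ⧸ Submodule.comap (I ^ 2).subtype (Q * I)) = (c : ℕ∞)) :
    0 < c ∧ c ≤ d ∧
      (c < d →
        (∀ n : ℕ, (H n : ℤ) =
          e 0 * ((n + d).choose d : ℤ) - e 1 * ((n + d - 1).choose (d - 1) : ℤ) +
            ((n + d - c - 1).choose (d - c - 1) : ℤ)) ∧
        e (c + 1) = (-1) ^ (c + 1) ∧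
        ∀ i : ℕ, 2 ≤ i → i ≤ d → i ≠ c + 1 → e i = 0) := by
  subst hQ
  obtain ⟨r, hred⟩ := hred
  obtain ⟨-, rs, hrs, hmem, hreg⟩ := hCM
  have hseq : HasRegularSeq (⊥ : Ideal A) d := hrs ▸ .of_isRegular hmem hreg
  obtain ⟨p, rfl⟩ : ∃ p, d = p + 1 := Nat.exists_eq_add_of_le' hd
  have ha : IsQuasiRegularParameters a := by
    refine .of_hasRegularSeq (by rwa [Fintype.card_fin])
      (fun i => hI.1 (hQI (Ideal.subset_span ⟨i, rfl⟩)))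
      (exists_pow_maximalIdeal_le hI.2 (r := r + 1) (hred.trans_le Ideal.mul_le_left))
  simp only [sum_choose_eq_sum_multichoose] at hHS
  rw [mul_comm] at hc
  obtain ⟨hc0, hcd, hform⟩ := ha.hilbertFunction_eq hseq hQI hI.1 hred
    (fun n => krullDim_submodule_eq_iff.1 (hH n)) hHS he (krullDim_submodule_eq_iff.1 hc)
  refine ⟨hc0, hcd, fun hlt => ⟨fun n => ?_, ?_⟩⟩
  · rw [hform n, multichoose_succ_eq_choose, multichoose_succ_eq_choose,
      show p + 1 - c = p - c + 1 by omega, multichoose_succ_eq_choose,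
      show n + (p + 1) - 1 = n + p by omega, show n + (p + 1) - c - 1 = n + (p - c) by omega,
      Nat.add_sub_cancel]
    rfl
  · exact (hilbert_coefficients_eq hc0 hlt hHS hform).2.2
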